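/- arXiv:1211.5579 — 2 statements merged into one kernel-verified Lean document; each statement's English description precedes it below -/
import Mathlib

section
/- Let (x, y) ∈ E × E with max(v₁, w₁)·δ < dist(x, ∂E) and w₁·δ < dist(y, ∂E). If p(x) > 0, α·d < 1 and 8·β·d < 1, then q̂ₙ(x, y) → q(x, y) almost surely as n → ∞. -/
open MeasureTheory ProbabilityTheory Filter

noncomputable def iterK {S : Type*} [MeasurableSpace S] (R : S → Measure S) : ℕ → S → Measure S
  | 0, y => Measure.dirac y
  | n+1, y => (iterK R n y).bind R

lemma aux_bdd_int {Ω : Type*} [MeasurableSpace Ω] (P : Measure Ω) [IsFiniteMeasure P]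
    (f : Ω → ℝ) (hf : Measurable f) (M : ℝ) (h : ∀ ω, |f ω| ≤ M) : Integrable f P :=
  Integrable.of_bound hf.aestronglyMeasurable M (Eventually.of_forall h)

lemma aux_geom (t : ℝ) (ht0 : 0 < t) (ht1 : t < 1) (n : ℕ) :
    ∑ i ∈ Finset.range n, t ^ i ≤ 1 / (1 - t) := by
  have h := mul_neg_geom_sum t n
  have h1 : 0 < 1 - t := by linarith
  have := pow_pos ht0 n
  rw [le_div_iff₀ h1]
  linarith

lemma aux_var {Ω : Type*} [MeasurableSpace Ω] (P : Measure Ω) [IsProbabilityMeasure P]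
    (Y : ℕ → Ω → ℝ) (hYm : ∀ j, Measurable (Y j)) (M : ℕ → ℝ) (hYb : ∀ j ω, |Y j ω| ≤ M j)
    (C s t : ℝ) (hC : 0 ≤ C) (hs0 : 0 ≤ s) (ht0 : 0 < t) (ht1 : t < 1)
    (hcov : ∀ i j, i ≤ j → |∫ ω, Y i ω * Y j ω ∂P - (∫ ω, Y i ω ∂P) * ∫ ω, Y j ω ∂P|
      ≤ C * ((j:ℝ) + 1) ^ s * t ^ (j - i)) (n : ℕ) :
    ∫ ω, (∑ i ∈ Finset.range n, (Y i ω - ∫ ω', Y i ω' ∂P)) ^ 2 ∂P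
      ≤ (3 * C / (1 - t)) * n * (n:ℝ) ^ s := by
  have h1t : 0 < 1 - t := by linarith
  set e : ℕ → ℝ := fun i => ∫ ω', Y i ω' ∂P with he
  have hYi : ∀ i, Integrable (Y i) P := fun i => aux_bdd_int P _ (hYm i) _ (hYb i)
  have hYYi : ∀ i j, Integrable (fun ω => Y i ω * Y j ω) P := fun i j =>
    aux_bdd_int P _ ((hYm i).mul (hYm j)) (M i * M j) (fun ω => by
      rw [abs_mul]
      exact mul_le_mul (hYb i ω) (hYb j ω) (abs_nonneg _) ((abs_nonneg _).trans (hYb i ω)))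
  have hWWi : ∀ i j, Integrable (fun ω => (Y i ω - e i) * (Y j ω - e j)) P := fun i j => by
    have : (fun ω => (Y i ω - e i) * (Y j ω - e j)) =
      fun ω => Y i ω * Y j ω - e j * Y i ω - e i * Y j ω + e i * e j := by
      funext ω; ring
    rw [this]
    exact (((hYYi i j).sub ((hYi i).const_mul _)).sub ((hYi j).const_mul _)).add
      (integrable_const _)
  have hWW : ∀ i j, ∫ ω, (Y i ω - e i) * (Y j ω - e j) ∂P = ∫ ω, Y i ω * Y j ω ∂P - e i * e j := by
    intro i j
    have : (fun ω => (Y i ω - e i) * (Y j ω - e j)) =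
      fun ω => Y i ω * Y j ω - e j * Y i ω - e i * Y j ω + e i * e j := by
      funext ω; ring
    have i1 : Integrable (fun ω => Y i ω * Y j ω - e j * Y i ω) P :=
      (hYYi i j).sub ((hYi i).const_mul _)
    have i2 : Integrable (fun ω => Y i ω * Y j ω - e j * Y i ω - e i * Y j ω) P :=
      i1.sub ((hYi j).const_mul _)
    rw [this, integral_add i2 (integrable_const _), integral_sub i1 ((hYi j).const_mul _),
      integral_sub (hYYi i j) ((hYi i).const_mul _), integral_const_mul, integral_const_mul]
    simp only [integral_const, probReal_univ, one_smul]
    change _ - e j * e i - e i * e j + _ = _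
    ring
  induction n with
  | zero => simp
  | succ n ih =>
    have hsum : ∀ m, Integrable (fun ω => (∑ i ∈ Finset.range m, (Y i ω - e i)) ^ 2) P := by
      intro m
      have : (fun ω => (∑ i ∈ Finset.range m, (Y i ω - e i)) ^ 2) = fun ω =>
        ∑ i ∈ Finset.range m, ∑ j ∈ Finset.range m, (Y i ω - e i) * (Y j ω - e j) := by
        funext ω; rw [sq, Finset.sum_mul_sum]
      rw [this]
      exact integrable_finsetSum _ fun i _ => integrable_finsetSum _ fun j _ => hWWi i j
    have hcr : Integrable (fun ω => ∑ i ∈ Finset.range n, (Y i ω - e i) * (Y n ω - e n)) P :=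
      integrable_finsetSum _ fun i _ => hWWi i n
    have hdec : (fun ω => (∑ i ∈ Finset.range (n+1), (Y i ω - e i)) ^ 2) = fun ω =>
        (∑ i ∈ Finset.range n, (Y i ω - e i)) ^ 2
        + 2 * (∑ i ∈ Finset.range n, (Y i ω - e i) * (Y n ω - e n))
        + (Y n ω - e n) * (Y n ω - e n) := by
      funext ω
      rw [Finset.sum_range_succ, ← Finset.sum_mul]; ring
    have i3 : Integrable (fun ω => (∑ i ∈ Finset.range n, (Y i ω - e i)) ^ 2
        + 2 * (∑ i ∈ Finset.range n, (Y i ω - e i) * (Y n ω - e n))) P :=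
      (hsum n).add (hcr.const_mul 2)
    rw [hdec, integral_add i3 (hWWi n n),
      integral_add (hsum n) (hcr.const_mul 2), integral_const_mul,
      integral_finsetSum _ (fun i _ => hWWi i n)]
    simp only [hWW]
    have hA : (0:ℝ) ≤ ((n:ℝ) + 1) ^ s := by positivity
    have hb1 : ∑ i ∈ Finset.range n, (∫ ω, Y i ω * Y n ω ∂P - e i * e n)
        ≤ C * ((n:ℝ) + 1) ^ s * (1 / (1 - t)) := by
      calc _ ≤ ∑ i ∈ Finset.range n, C * ((n:ℝ) + 1) ^ s * t ^ (n - 1 - i) := by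
            apply Finset.sum_le_sum
            intro i hi
            have hi' := Finset.mem_range.1 hi
            refine (le_abs_self _).trans ((hcov i n hi'.le).trans ?_)
            refine mul_le_mul_of_nonneg_left ?_ (by positivity)
            exact pow_le_pow_of_le_one ht0.le ht1.le (by omega)
        _ = C * ((n:ℝ) + 1) ^ s * ∑ i ∈ Finset.range n, t ^ i := by
            rw [← Finset.mul_sum, Finset.sum_range_reflect]
        _ ≤ _ := by
            refine mul_le_mul_of_nonneg_left (aux_geom t ht0 ht1 n) (by positivity)
    have hb2 : ∫ ω, Y n ω * Y n ω ∂P - e n * e n ≤ C * ((n:ℝ) + 1) ^ s * (1 / (1 - t)) := by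
      refine (le_abs_self _).trans ((hcov n n le_rfl).trans ?_)
      refine mul_le_mul_of_nonneg_left ?_ (by positivity)
      simp only [Nat.sub_self, pow_zero]
      rw [le_div_iff₀ h1t]; linarith
    have hm : (n:ℝ) ^ s ≤ ((n:ℝ) + 1) ^ s :=
      Real.rpow_le_rpow (by positivity) (by linarith) hs0
    have hD : 0 ≤ 3 * C / (1 - t) := by positivity
    have h3 : (3 * C / (1 - t)) * n * (n:ℝ) ^ s ≤ (3 * C / (1 - t)) * n * ((n:ℝ) + 1) ^ s :=
      mul_le_mul_of_nonneg_left hm (by positivity)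
    have h4 : C * ((n:ℝ) + 1) ^ s * (1 / (1 - t)) * 3 = (3 * C / (1 - t)) * ((n:ℝ) + 1) ^ s := by
      field_simp
    push_cast
    nlinarith

lemma aux_slln {Ω : Type*} [MeasurableSpace Ω] (P : Measure Ω) [IsProbabilityMeasure P]
    (Y : ℕ → Ω → ℝ) (hYm : ∀ j, Measurable (Y j)) (M : ℕ → ℝ) (hYb : ∀ j ω, |Y j ω| ≤ M j)
    (hY0 : ∀ j ω, 0 ≤ Y j ω)
    (C s t : ℝ) (hC : 0 ≤ C) (hs0 : 0 ≤ s) (hs1 : s < 1) (ht0 : 0 < t) (ht1 : t < 1)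
    (hcov : ∀ i j, i ≤ j → |∫ ω, Y i ω * Y j ω ∂P - (∫ ω, Y i ω ∂P) * ∫ ω, Y j ω ∂P|
      ≤ C * ((j:ℝ) + 1) ^ s * t ^ (j - i))
    (l : ℝ) (hl : Tendsto (fun j => ∫ ω, Y j ω ∂P) atTop (nhds l)) :
    ∀ᵐ ω ∂P, Tendsto (fun n : ℕ => (∑ j ∈ Finset.range n, Y j ω) / n) atTop (nhds l) := by
  have h1t : 0 < 1 - t := by linarith
  set e : ℕ → ℝ := fun i => ∫ ω', Y i ω' ∂P with he
  set D := 3 * C / (1 - t) with hD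
  have hD0 : 0 ≤ D := by positivity
  have hvar := aux_var P Y hYm M hYb C s t hC hs0 ht0 ht1 hcov
  have key : ∀ c : ℝ, 1 < c → ∀ᵐ ω ∂P, Tendsto (fun k : ℕ =>
      (∑ j ∈ Finset.range ⌊c ^ k⌋₊, Y j ω) / (⌊c ^ k⌋₊ : ℝ)) atTop (nhds l) := by
    intro c hc
    have hN : ∀ k : ℕ, c ^ k / 2 ≤ (⌊c ^ k⌋₊ : ℝ) := by
      intro k
      have h1 : 1 ≤ c ^ k := one_le_pow₀ hc.le
      have h2 := Nat.lt_floor_add_one (c ^ k)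
      have h3 : (1:ℝ) ≤ (⌊c ^ k⌋₊ : ℝ) := by
        exact_mod_cast Nat.one_le_floor_iff _ |>.2 h1
      linarith
    have hNpos : ∀ k : ℕ, (0:ℝ) < (⌊c ^ k⌋₊ : ℝ) := fun k =>
      lt_of_lt_of_le (by positivity) (hN k)
    let f : ℕ → Ω → ℝ := fun k ω =>
      ((∑ i ∈ Finset.range ⌊c ^ k⌋₊, (Y i ω - e i)) / (⌊c ^ k⌋₊ : ℝ)) ^ 2
    have hfm : ∀ k, Measurable (f k) := by
      intro k
      exact ((Finset.measurable_sum _ fun i _ => (hYm i).sub_const _).div_const _).pow_const _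
    have hfb : ∀ k, ∃ B, ∀ ω, |f k ω| ≤ B := by
      intro k
      refine ⟨((∑ i ∈ Finset.range ⌊c ^ k⌋₊, (M i + |e i|)) / (⌊c ^ k⌋₊ : ℝ)) ^ 2, fun ω => ?_⟩
      simp only [f]
      rw [abs_of_nonneg (sq_nonneg _), ← sq_abs, abs_div, abs_of_pos (hNpos k)]
      gcongr
      refine (Finset.abs_sum_le_sum_abs _ _).trans (Finset.sum_le_sum fun i _ => ?_)
      exact (abs_sub _ _).trans (by gcongr; exact hYb i ω)
    have hfi : ∀ k, Integrable (f k) P := fun k => by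
      obtain ⟨B, hB⟩ := hfb k
      exact aux_bdd_int P _ (hfm k) B hB
    have hfint : ∀ k, ∫ ω, f k ω ∂P ≤ D * 2 ^ (1 - s) * (c ^ (s - 1)) ^ k := by
      intro k
      have h0 := hvar ⌊c ^ k⌋₊
      have hp := hNpos k
      simp only [f, div_pow]
      rw [integral_div, div_le_iff₀ (by positivity)]
      refine h0.trans ?_
      have e1 : (⌊c ^ k⌋₊ : ℝ) * (⌊c ^ k⌋₊ : ℝ) ^ s
          = (⌊c ^ k⌋₊ : ℝ) ^ (s - 1) * (⌊c ^ k⌋₊ : ℝ) ^ 2 := by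
        rw [← Real.rpow_natCast _ 2, ← Real.rpow_add hp]
        nth_rewrite 1 [← Real.rpow_one (⌊c ^ k⌋₊ : ℝ)]
        rw [← Real.rpow_add hp]; congr 1; push_cast; ring
      have e2 : (⌊c ^ k⌋₊ : ℝ) ^ (s - 1) ≤ (c ^ k / 2) ^ (s - 1) :=
        Real.rpow_le_rpow_of_nonpos (by positivity) (hN k) (by linarith)
      have e3 : (c ^ k / 2) ^ (s - 1) = 2 ^ (1 - s) * (c ^ (s - 1)) ^ k := by
        rw [Real.div_rpow (by positivity) (by norm_num), ← Real.rpow_natCast, ← Real.rpow_natCast,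
          ← Real.rpow_mul (by positivity), ← Real.rpow_mul (by positivity),
          show 1 - s = -(s - 1) by ring, Real.rpow_neg (by norm_num), mul_comm (s-1)]
        field_simp
      rw [mul_assoc, e1, mul_assoc D, ← e3, ← mul_assoc]
      gcongr
    have hgs : Summable fun k : ℕ => D * 2 ^ (1 - s) * (c ^ (s - 1)) ^ k := by
      apply Summable.mul_left
      apply summable_geometric_of_lt_one (by positivity)
      exact Real.rpow_lt_one_of_one_lt_of_neg hc (by linarith)
    have hfin : ∫⁻ ω, ∑' k, ENNReal.ofReal (f k ω) ∂P ≠ ⊤ := by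
      rw [lintegral_tsum (fun k => (hfm k).ennreal_ofReal.aemeasurable)]
      refine ne_top_of_le_ne_top hgs.tsum_ofReal_ne_top (ENNReal.tsum_le_tsum fun k => ?_)
      rw [← ofReal_integral_eq_lintegral_ofReal (hfi k)
        (Eventually.of_forall fun ω => sq_nonneg _)]
      exact ENNReal.ofReal_le_ofReal (hfint k)
    have hae := ae_lt_top (Measurable.tsum fun k => (hfm k).ennreal_ofReal) hfin
    filter_upwards [hae] with ω hω
    have h1 := ENNReal.tendsto_atTop_zero_of_tsum_ne_top hω.ne
    have h2 : Tendsto (fun k => f k ω) atTop (nhds 0) := by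
      have := (ENNReal.tendsto_toReal (ENNReal.zero_ne_top)).comp h1
      refine this.congr fun k => ?_
      simp only [Function.comp]
      exact ENNReal.toReal_ofReal (sq_nonneg _)
    have h3 : Tendsto (fun k : ℕ => (∑ i ∈ Finset.range ⌊c ^ k⌋₊, (Y i ω - e i)) / (⌊c ^ k⌋₊ : ℝ))
        atTop (nhds 0) := by
      rw [tendsto_zero_iff_abs_tendsto_zero]
      have := (Real.continuous_sqrt.tendsto 0).comp h2
      simp only [Real.sqrt_zero] at this
      refine this.congr fun k => ?_
      simp only [Function.comp, f, Real.sqrt_sq_eq_abs]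
    have h4 : Tendsto (fun k : ℕ => ⌊c ^ k⌋₊) atTop atTop :=
      tendsto_nat_floor_atTop.comp (tendsto_pow_atTop_atTop_of_one_lt hc)
    have h5 := h3.add ((hl.cesaro).comp h4)
    rw [zero_add] at h5
    refine h5.congr fun k => ?_
    simp only [Function.comp]
    rw [Finset.sum_sub_distrib]
    have := (hNpos k).ne'
    field_simp
    ring
  have hall : ∀ᵐ ω ∂P, ∀ m : ℕ, Tendsto (fun k : ℕ =>
      (∑ j ∈ Finset.range ⌊(1 + 1 / ((m:ℝ) + 1)) ^ k⌋₊, Y j ω) / (⌊(1 + 1 / ((m:ℝ) + 1)) ^ k⌋₊ : ℝ))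
      atTop (nhds l) := by
    rw [ae_all_iff]
    intro m
    exact key _ (by have : (0:ℝ) < 1 / ((m:ℝ) + 1) := by positivity
                    linarith)
  filter_upwards [hall] with ω hω
  refine tendsto_div_of_monotone_of_tendsto_div_floor_pow
    (fun n => ∑ j ∈ Finset.range n, Y j ω) l ?_ (fun m => 1 + 1 / ((m:ℝ) + 1)) ?_ ?_ hω
  · refine monotone_nat_of_le_succ fun n => ?_
    rw [Finset.sum_range_succ]
    linarith [hY0 n ω]
  · intro m
    have : (0:ℝ) < 1 / ((m:ℝ) + 1) := by positivity
    linarith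
  · have := (tendsto_one_div_add_atTop_nhds_zero_nat (𝕜 := ℝ)).const_add 1
    simpa using this

lemma aux_ball {V : Type*} [NormedAddCommGroup V] [NormedSpace ℝ V] (E : Set V) (hE : IsOpen E)
    (x : V) (hx : x ∈ E) (a : ℝ) (ha : a < Metric.infDist x (frontier E)) :
    Metric.ball x a ⊆ E := by
  rcases le_or_gt a 0 with h0 | h0
  · rw [Metric.ball_eq_empty.2 h0]; exact Set.empty_subset _
  refine (convex_ball x a).isPreconnected.subset_of_closure_inter_subset hE
    ⟨x, Metric.mem_ball_self h0, hx⟩ ?_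
  rintro z ⟨hz1, hz2⟩
  by_contra hz
  have hf : z ∈ frontier E := by
    rw [hE.frontier_eq]; exact ⟨hz1, hz⟩
  have := Metric.infDist_le_dist_of_mem (x := x) hf
  rw [Metric.mem_ball, dist_comm] at hz2
  linarith

lemma aux_kint {d : ℕ} (K : EuclideanSpace ℝ (Fin d) → ℝ) (hKint : ∫ z, K z ∂volume = 1)
    (a : ℝ) (ha : 0 < a) (x : EuclideanSpace ℝ (Fin d)) :
    Integrable (fun z => (a ^ d)⁻¹ * K (a⁻¹ • (z - x))) volume ∧
    ∫ z, (a ^ d)⁻¹ * K (a⁻¹ • (z - x)) = 1 := by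
  have hKi : Integrable K volume := by
    by_contra h
    rw [integral_undef h] at hKint
    exact zero_ne_one hKint
  constructor
  · exact ((hKi.comp_smul (inv_ne_zero ha.ne')).comp_sub_right x).const_mul _
  · rw [integral_const_mul, integral_sub_right_eq_self (fun z => K (a⁻¹ • z)),
      Measure.integral_comp_smul, hKint]
    rw [finrank_euclideanSpace_fin, inv_pow, inv_inv, abs_of_pos (by positivity), smul_eq_mul,
      mul_one, inv_mul_cancel₀ (by positivity)]

lemma aux_ksupp {d : ℕ} (K : EuclideanSpace ℝ (Fin d) → ℝ)
    (δ : ℝ) (hKsupp : Function.support K ⊆ Metric.ball 0 δ)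
    (a : ℝ) (ha : 0 < a) (x z : EuclideanSpace ℝ (Fin d)) (h : K (a⁻¹ • (z - x)) ≠ 0) :
    dist z x < a * δ := by
  have := hKsupp h
  rw [Metric.mem_ball, dist_zero_right, norm_smul, norm_inv, Real.norm_of_nonneg ha.le,
    ← dist_eq_norm, inv_mul_lt_iff₀ ha] at this
  exact this

lemma aux_kapprox {d : ℕ} (K : EuclideanSpace ℝ (Fin d) → ℝ) (hKnonneg : ∀ z, 0 ≤ K z)
    (hKint : ∫ z, K z ∂volume = 1)
    (δ : ℝ) (hKsupp : Function.support K ⊆ Metric.ball 0 δ)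
    (a : ℝ) (ha : 0 < a) (x : EuclideanSpace ℝ (Fin d))
    (f : EuclideanSpace ℝ (Fin d) → ℝ) (hf : Measurable f) (C : ℝ) (hfC : ∀ z, |f z| ≤ C)
    (c L : ℝ) (hL : ∀ z, dist z x < a * δ → |f z - c| ≤ L) :
    |(∫ z, f z * ((a ^ d)⁻¹ * K (a⁻¹ • (z - x)))) - c| ≤ L := by
  obtain ⟨h1, h2⟩ := aux_kint K hKint a ha x
  have h3 : Integrable (fun z => f z * ((a ^ d)⁻¹ * K (a⁻¹ • (z - x)))) volume :=
    h1.bdd_mul (c := C) hf.aestronglyMeasurable (Eventually.of_forall hfC)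
  have h4 : (∫ z, f z * ((a ^ d)⁻¹ * K (a⁻¹ • (z - x)))) - c
      = ∫ z, (f z * ((a ^ d)⁻¹ * K (a⁻¹ • (z - x))) - c * ((a ^ d)⁻¹ * K (a⁻¹ • (z - x)))) := by
    rw [integral_sub h3 (h1.const_mul c), integral_const_mul, h2, mul_one]
  rw [h4, ← Real.norm_eq_abs]
  refine (norm_integral_le_of_norm_le (h1.const_mul L) (Eventually.of_forall fun z => ?_)).trans ?_
  · rw [← sub_mul, norm_mul]
    have hk : 0 ≤ (a ^ d)⁻¹ * K (a⁻¹ • (z - x)) := mul_nonneg (by positivity) (hKnonneg _)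
    rw [Real.norm_of_nonneg hk]
    by_cases hz : K (a⁻¹ • (z - x)) = 0
    · simp [hz]
    · exact mul_le_mul_of_nonneg_right (hL z (aux_ksupp K δ hKsupp a ha x z hz)) hk
  · rw [integral_const_mul, h2, mul_one]

lemma aux_dens {d : ℕ} (μ : Measure (EuclideanSpace ℝ (Fin d)))
    (E : Set (EuclideanSpace ℝ (Fin d))) (hE : MeasurableSet E)
    (f : EuclideanSpace ℝ (Fin d) → ℝ) (hf : Measurable f) (hf0 : ∀ z, 0 ≤ f z)
    (h : ∀ B : Set (EuclideanSpace ℝ (Fin d)), B ⊆ E → MeasurableSet B →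
      μ B = ∫⁻ z in B, ENNReal.ofReal (f z) ∂volume)
    (g : EuclideanSpace ℝ (Fin d) → ℝ) (hg : ∀ z ∉ E, g z = 0) :
    ∫ z, g z ∂μ = ∫ z, f z * g z := by
  have hr : μ.restrict E = (volume.restrict E).withDensity (fun z => ENNReal.ofReal (f z)) := by
    ext B hB
    rw [Measure.restrict_apply hB, h _ Set.inter_subset_right (hB.inter hE),
      withDensity_apply _ hB, Measure.restrict_restrict hB]
  rw [← setIntegral_eq_integral_of_forall_compl_eq_zero hg, hr,
    integral_withDensity_eq_integral_toReal_smul hf.ennreal_ofReal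
      (Eventually.of_forall fun z => ENNReal.ofReal_lt_top)]
  simp only [ENNReal.toReal_ofReal (hf0 _), smul_eq_mul]
  exact setIntegral_eq_integral_of_forall_compl_eq_zero fun z hz => by rw [hg z hz, mul_zero]

lemma aux_layer {S : Type*} [MeasurableSpace S] (μ ν : Measure S) [IsProbabilityMeasure μ]
    [IsProbabilityMeasure ν] (η : ℝ)
    (h : ∀ B : Set S, MeasurableSet B → |(μ B).toReal - (ν B).toReal| ≤ η)
    (g : S → ℝ) (hg : Measurable g) (C : ℝ) (hg0 : ∀ z, 0 ≤ g z) (hgC : ∀ z, g z ≤ C) :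
    |∫ z, g z ∂μ - ∫ z, g z ∂ν| ≤ C * η := by
  have key : ∀ (μ : Measure S) [IsProbabilityMeasure μ],
      ∫ z, g z ∂μ = ∫ t in Set.Ioc 0 C, μ.real {a | t < g a} ∧
      IntegrableOn (fun t => μ.real {a | t < g a}) (Set.Ioc 0 C) := by
    intro μ _
    have hgi : Integrable g μ := aux_bdd_int μ g hg C fun z => by
      rw [abs_of_nonneg (hg0 z)]; exact hgC z
    constructor
    · rw [hgi.integral_eq_integral_meas_lt (Eventually.of_forall hg0)]
      apply setIntegral_eq_of_subset_of_forall_sdiff_eq_zero measurableSet_Ioi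
        Set.Ioc_subset_Ioi_self
      rintro t ⟨ht1, ht2⟩
      have : {a | t < g a} = ∅ := by
        ext a
        simp only [Set.mem_ofPred_eq, Set.mem_empty_iff_false, iff_false, not_lt]
        by_contra hh
        exact ht2 ⟨ht1, (not_le.1 hh).le.trans (hgC a)⟩
      rw [this]; simp
    · have hanti : Antitone (fun t => μ.real {a | t < g a}) := by
        intro s t hst
        exact measureReal_mono (fun a ha => lt_of_le_of_lt hst ha)
      refine Integrable.of_bound hanti.measurable.aestronglyMeasurable 1
        (Eventually.of_forall fun t => ?_)
      rw [Real.norm_of_nonneg measureReal_nonneg]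
      exact measureReal_le_one
  obtain ⟨a1, a2⟩ := key μ
  obtain ⟨b1, b2⟩ := key ν
  rw [a1, b1, ← integral_sub a2 b2, ← Real.norm_eq_abs]
  have hC : 0 ≤ C := by
    obtain ⟨z⟩ : Nonempty S := nonempty_of_isProbabilityMeasure μ
    exact (hg0 z).trans (hgC z)
  refine (norm_setIntegral_le_of_norm_le_const (C := η) (by simp) fun t _ => ?_).trans ?_
  · exact h _ (measurableSet_lt measurable_const hg)
  · rw [Measure.real, Real.volume_Ioc, sub_zero, ENNReal.toReal_ofReal hC, mul_comm]

lemma aux_iterK_meas {S : Type*} [MeasurableSpace S] (R : S → Measure S) (hR : Measurable R)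
    (n : ℕ) : Measurable (iterK R n) := by
  induction n with
  | zero => exact Measure.measurable_dirac
  | succ n ih => exact (Measure.measurable_bind' hR).comp ih

lemma aux_law {S Ω : Type*} [MeasurableSpace S] [MeasurableSpace Ω] (P : Measure Ω)
    [IsProbabilityMeasure P] (Zm : ℕ → Ω → S) (hZ : ∀ n, Measurable (Zm n))
    (R : S → Measure S) (hR : Measurable R) (hRp : ∀ ξ, IsProbabilityMeasure (R ξ))
    (hM : ∀ n, 1 ≤ n → ∀ B : Set S, MeasurableSet B →
      ∫ ω, B.indicator (fun _ => (1:ℝ)) (Zm (n+1) ω) ∂P =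
      ∫ ω, (∫ u, B.indicator (fun _ => (1:ℝ)) u ∂(R (Zm n ω))) ∂P) (m : ℕ) :
    P.map (Zm (m+1)) = (P.map (Zm 1)).bind (iterK R m) := by
  have step : ∀ n, 1 ≤ n → P.map (Zm (n+1)) = (P.map (Zm n)).bind R := by
    intro n hn
    ext B hB
    have h := hM n hn B hB
    rw [Measure.bind_apply hB hR.aemeasurable, lintegral_map
      (show Measurable (fun a => R a B) from (Measure.measurable_coe hB).comp hR) (hZ n), Measure.map_apply (hZ _) hB]
    have h1 : ∫ ω, B.indicator (fun _ => (1:ℝ)) (Zm (n+1) ω) ∂P = P.real (Zm (n+1) ⁻¹' B) := by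
      rw [← integral_indicator_one ((hZ _) hB)]
      rfl
    have h2 : ∀ ω, ∫ u, B.indicator (fun _ => (1:ℝ)) u ∂(R (Zm n ω)) = (R (Zm n ω) B).toReal := by
      intro ω
      have := integral_indicator_one (μ := R (Zm n ω)) hB
      exact this
    simp only [h1, h2] at h
    rw [integral_toReal (show AEMeasurable (fun ω => R (Zm n ω) B) P from
      ((Measure.measurable_coe hB).comp (hR.comp (hZ n))).aemeasurable)
      (Eventually.of_forall fun ω => measure_lt_top _ _)] at h
    refine (ENNReal.toReal_eq_toReal_iff' (measure_ne_top _ _) ?_).1 h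
    refine ne_top_of_le_ne_top ENNReal.one_ne_top ?_
    calc _ ≤ ∫⁻ ω, 1 ∂P := lintegral_mono fun ω => prob_le_one
      _ = 1 := by simp
  induction m with
  | zero =>
    have : iterK R 0 = Measure.dirac := rfl
    rw [this, Measure.bind_dirac]
  | succ m ih =>
    rw [step (m+1) (by omega), ih, Measure.bind_bind (aux_iterK_meas R hR m).aemeasurable
      hR.aemeasurable]
    rfl

lemma aux_tv {S Ω : Type*} [MeasurableSpace S] [MeasurableSpace Ω] (P : Measure Ω)
    [IsProbabilityMeasure P] (Z1 : Ω → S) (hZ : Measurable Z1) (G : S → Measure S)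
    (hG : Measurable G) (hp : IsProbabilityMeasure ((P.map Z1).bind G))
    (D : Set S) (hD : ∀ ω, Z1 ω ∈ D) (π : Measure S) [IsProbabilityMeasure π] (η : ℝ)
    (B : Set S) (hB : MeasurableSet B)
    (h : ∀ ξ ∈ D, |(G ξ B).toReal - (π B).toReal| ≤ η) :
    |((P.map Z1).bind G B).toReal - (π B).toReal| ≤ η := by
  have hm : Measurable fun ω => G (Z1 ω) B := ((Measure.measurable_coe hB).comp hG).comp hZ
  have e0 : (P.map Z1).bind G B = ∫⁻ ω, G (Z1 ω) B ∂P := by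
    rw [Measure.bind_apply hB hG.aemeasurable,
      lintegral_map
        (show Measurable (fun a => G a B) from (Measure.measurable_coe hB).comp hG) hZ]
  have hfin : ∀ᵐ ω ∂P, G (Z1 ω) B < ⊤ := ae_lt_top hm (e0 ▸ measure_ne_top _ _)
  have e1 : ((P.map Z1).bind G B).toReal = ∫ ω, (G (Z1 ω) B).toReal ∂P := by
    rw [e0, integral_toReal hm.aemeasurable hfin]
  have hi : Integrable (fun ω => (G (Z1 ω) B).toReal) P :=
    integrable_toReal_of_lintegral_ne_top hm.aemeasurable (e0 ▸ measure_ne_top _ _)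
  have e2 : (π B).toReal = ∫ _ω, (π B).toReal ∂P := by simp
  rw [e1, e2, ← integral_sub hi (integrable_const _), ← Real.norm_eq_abs]
  refine (norm_integral_le_of_norm_le_const (C := η)
    (Eventually.of_forall fun ω => h _ (hD ω))).trans ?_
  simp

lemma aux_pull {Ω : Type*} {m m0 : MeasurableSpace Ω} (hm : m ≤ m0) (P : Measure Ω)
    [IsProbabilityMeasure P] (f G H c : Ω → ℝ) (A B D L : ℝ)
    (hf : Measurable[m] f) (hf0 : ∀ ω, 0 ≤ f ω) (hfA : ∀ ω, f ω ≤ A)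
    (hG : Measurable G) (hGB : ∀ ω, |G ω| ≤ B) (hH : P[G|m] =ᵐ[P] H)
    (hc : Measurable c) (hcD : ∀ ω, |c ω| ≤ D) (hL : ∀ ω, f ω ≠ 0 → |H ω - c ω| ≤ L) :
    |∫ ω, f ω * G ω ∂P - ∫ ω, f ω * c ω ∂P| ≤ L * ∫ ω, f ω ∂P := by
  have hfm : Measurable f := hf.mono hm le_rfl
  have hfa : ∀ ω, ‖f ω‖ ≤ A := fun ω => by
    rw [Real.norm_of_nonneg (hf0 ω)]; exact hfA ω
  have hGi : Integrable G P := aux_bdd_int P G hG B hGB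
  have hci : Integrable c P := aux_bdd_int P c hc D hcD
  have hfi : Integrable f P := aux_bdd_int P f hfm A hfa
  have hfG : Integrable (f * G) P := hGi.bdd_mul (c := A) hfm.aestronglyMeasurable
    (Eventually.of_forall hfa)
  have hfc : Integrable (fun ω => f ω * c ω) P := hci.bdd_mul (c := A) hfm.aestronglyMeasurable
    (Eventually.of_forall hfa)
  have h1 : P[f * G|m] =ᵐ[P] f * P[G|m] :=
    condExp_mul_of_stronglyMeasurable_left hf.stronglyMeasurable hfG hGi
  have h2 : P[f * G|m] =ᵐ[P] fun ω => f ω * H ω := by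
    filter_upwards [h1, hH] with ω e1 e2
    rw [e1, Pi.mul_apply, e2]
  have hfH : Integrable (fun ω => f ω * H ω) P := integrable_condExp.congr h2
  have h3 : ∫ ω, f ω * G ω ∂P = ∫ ω, f ω * H ω ∂P := by
    rw [← integral_congr_ae h2, integral_condExp hm]; rfl
  rw [h3, ← integral_sub hfH hfc, ← integral_const_mul, ← Real.norm_eq_abs]
  refine norm_integral_le_of_norm_le (hfi.const_mul L) (Eventually.of_forall fun ω => ?_)
  rw [← mul_sub, norm_mul, Real.norm_of_nonneg (hf0 ω), mul_comm L]
  by_cases h : f ω = 0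
  · simp [h]
  · exact mul_le_mul_of_nonneg_left (hL ω h) (hf0 ω)

lemma aux_vpow (v1 A : ℝ) (hv1 : 0 < v1) (j e : ℕ) (hj : 1 ≤ j) :
    ((v1 * (j:ℝ) ^ (-A)) ^ e)⁻¹ = (v1 ^ e)⁻¹ * (j:ℝ) ^ (A * e) := by
  have hj' : (0:ℝ) < j := by exact_mod_cast hj
  rw [mul_pow, mul_inv, ← Real.rpow_natCast ((j:ℝ) ^ (-A)), ← Real.rpow_mul hj'.le,
    ← Real.rpow_neg hj'.le]
  congr 2; ring

lemma aux_sumIcc (f : ℕ → ℝ) (n : ℕ) :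
    ∑ j ∈ Finset.Icc 1 n, f j = ∑ j ∈ Finset.range n, f (j + 1) := by
  induction n with
  | zero => simp
  | succ n ih => rw [Finset.sum_Icc_succ_top (by omega), ih, Finset.sum_range_succ]

lemma aux_absdiff (a b c : ℝ) (ha : 0 ≤ a) (hb : 0 ≤ b) (hac : a ≤ c) (hbc : b ≤ c) :
    |a - b| ≤ c := by
  rw [abs_le]; constructor <;> linarith

lemma aux_covscale {V Ω : Type*} [MeasurableSpace V] [MeasurableSpace Ω] (P : Measure Ω)
    (Zm Z : ℕ → Ω → V) (Bc bc : ℝ) (hBc : 0 < Bc) (hbc : 1 < bc)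
    (hcov : ∀ g h : V → V → ℝ, Measurable (Function.uncurry g) → Measurable (Function.uncurry h) →
      (∀ a b, |g a b| ≤ 1) → (∀ a b, |h a b| ≤ 1) →
      ∀ m n : ℕ, 1 ≤ m → m ≤ n →
        |∫ ω, g (Zm m ω) (Z m ω) * h (Zm n ω) (Z n ω) ∂P -
          (∫ ω, g (Zm m ω) (Z m ω) ∂P) * (∫ ω, h (Zm n ω) (Z n ω) ∂P)| ≤
          Bc * bc ^ (-((n:ℝ) - (m:ℝ))) * (1 + bc ^ (-(m:ℝ))))
    (g h : V → V → ℝ) (hg : Measurable (Function.uncurry g)) (hh : Measurable (Function.uncurry h))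
    (A B : ℝ) (hA : 0 < A) (hB : 0 < B) (hgA : ∀ a b, |g a b| ≤ A) (hhB : ∀ a b, |h a b| ≤ B)
    (m n : ℕ) (hm : 1 ≤ m) (hmn : m ≤ n) :
    |∫ ω, g (Zm m ω) (Z m ω) * h (Zm n ω) (Z n ω) ∂P -
          (∫ ω, g (Zm m ω) (Z m ω) ∂P) * (∫ ω, h (Zm n ω) (Z n ω) ∂P)| ≤
      A * B * (2 * Bc) * (bc⁻¹) ^ (n - m) := by
  have key := hcov (fun a b => A⁻¹ * g a b) (fun a b => B⁻¹ * h a b) (hg.const_mul A⁻¹)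
    (hh.const_mul B⁻¹)
    (fun a b => by
      rw [abs_mul, abs_inv, abs_of_pos hA, inv_mul_le_iff₀ hA, mul_one]; exact hgA a b)
    (fun a b => by
      rw [abs_mul, abs_inv, abs_of_pos hB, inv_mul_le_iff₀ hB, mul_one]; exact hhB a b) m n hm hmn
  have e1 : ∀ ω, A⁻¹ * g (Zm m ω) (Z m ω) * (B⁻¹ * h (Zm n ω) (Z n ω))
      = (A * B)⁻¹ * (g (Zm m ω) (Z m ω) * h (Zm n ω) (Z n ω)) := fun ω => by
    rw [mul_inv]; ring
  simp only [e1, integral_const_mul] at key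
  rw [show ∀ I J L : ℝ, (A * B)⁻¹ * I - A⁻¹ * J * (B⁻¹ * L) = (A * B)⁻¹ * (I - J * L) from
    fun I J L => by rw [mul_inv]; ring, abs_mul, abs_inv, abs_of_pos (mul_pos hA hB),
    inv_mul_le_iff₀ (mul_pos hA hB)] at key
  refine key.trans ?_
  have hb0 : 0 < bc := by linarith
  have e2 : bc ^ (-((n:ℝ) - (m:ℝ))) = (bc⁻¹) ^ (n - m) := by
    rw [← Nat.cast_sub hmn, Real.rpow_neg hb0.le, Real.rpow_natCast, inv_pow]
  have e3 : bc ^ (-(m:ℝ)) ≤ 1 := Real.rpow_le_one_of_one_le_of_nonpos hbc.le (by simp)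
  rw [e2, mul_assoc (A * B)]
  refine mul_le_mul_of_nonneg_left ?_ (mul_pos hA hB).le
  have : 0 < (bc⁻¹) ^ (n - m) := by positivity
  nlinarith [mul_pos hBc this]

set_option maxHeartbeats 2000000 in
theorem stmt0
    {d : ℕ} (hd : 1 ≤ d)
    {Ω : Type*} [MeasurableSpace Ω] (P : Measure Ω) [IsProbabilityMeasure P]
    (E : Set (EuclideanSpace ℝ (Fin d))) (hEopen : IsOpen E) (hEne : E.Nonempty)
    (Zm : ℕ → Ω → (EuclideanSpace ℝ (Fin d))) (hZmmeas : ∀ n, Measurable (Zm n))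
    (hZmmem : ∀ n, 1 ≤ n → ∀ ω, Zm n ω ∈ closure E)
    (R : (EuclideanSpace ℝ (Fin d)) → Measure (EuclideanSpace ℝ (Fin d))) (hRprob : ∀ ξ, IsProbabilityMeasure (R ξ))
    (hRkermeas : ∀ B : Set (EuclideanSpace ℝ (Fin d)), MeasurableSet B → Measurable fun ξ => R ξ B)
    (hMarkov : ∀ n, 1 ≤ n → ∀ g : (EuclideanSpace ℝ (Fin d)) → ℝ, Measurable g → (∃ C, ∀ u, |g u| ≤ C) →
      P[fun ω => g (Zm (n+1) ω)|⨆ i : Fin n, MeasurableSpace.comap (Zm (i.1+1)) inferInstance]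
        =ᵐ[P] fun ω => ∫ u, g u ∂(R (Zm n ω)))
    (μ : Measure (EuclideanSpace ℝ (Fin d))) (hμprob : IsProbabilityMeasure μ)
    (ε : ℝ) (hε : 0 < ε) (k : ℕ) (hk : 1 ≤ k)
    (hDoeblin : ∀ ξ ∈ closure E, ∀ B : Set (EuclideanSpace ℝ (Fin d)), MeasurableSet B →
      ENNReal.ofReal ε * μ B ≤ iterK R k ξ B)
    (π : Measure (EuclideanSpace ℝ (Fin d))) (hπprob : IsProbabilityMeasure π)
    (hπinv : ∀ B : Set (EuclideanSpace ℝ (Fin d)), MeasurableSet B → π B = ∫⁻ ξ, R ξ B ∂π)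
    (κ ρ : ℝ) (hκ : 0 < κ) (hρ : 1 < ρ)
    (hTV : ∀ n : ℕ, 1 ≤ n → ∀ ξ ∈ closure E, ∀ B : Set (EuclideanSpace ℝ (Fin d)), MeasurableSet B →
      |(iterK R n ξ B).toReal - (π B).toReal| ≤ κ * ρ ^ (-(n:ℝ)))
    (r : (EuclideanSpace ℝ (Fin d)) → (EuclideanSpace ℝ (Fin d)) → ℝ) (hrmeas : Measurable (Function.uncurry r)) (hrnonneg : ∀ a b, 0 ≤ r a b)
    (Cr : ℝ) (hrbdd : ∀ a b, r a b ≤ Cr)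
    (rLip : ℝ) (hrLip : ∀ a : (EuclideanSpace ℝ (Fin d)), ∀ b ∈ E, ∀ b' ∈ E, |r a b' - r a b| ≤ rLip * dist b' b)
    (hRdens : ∀ ξ ∈ closure E, ∀ B : Set (EuclideanSpace ℝ (Fin d)), B ⊆ E → MeasurableSet B →
      R ξ B = ∫⁻ z in B, ENNReal.ofReal (r ξ z) ∂volume)
    (p : (EuclideanSpace ℝ (Fin d)) → ℝ) (hp : ∀ z ∈ E, p z = ∫ u, r u z ∂π)
    (K : (EuclideanSpace ℝ (Fin d)) → ℝ) (hKmeas : Measurable K) (hKnonneg : ∀ z, 0 ≤ K z)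
    (CK : ℝ) (hKbdd : ∀ z, K z ≤ CK) (hKint : ∫ z, K z ∂volume = 1)
    (δ : ℝ) (hδ : 0 < δ) (hKsupp : Function.support K ⊆ Metric.ball 0 δ)
    (v1 Alpha : ℝ) (hv1 : 0 < v1) (hAlpha : 0 < Alpha)
    (v : ℕ → ℝ) (hv : ∀ j : ℕ, v j = v1 * (j:ℝ) ^ (-Alpha))
    (Z : ℕ → Ω → (EuclideanSpace ℝ (Fin d))) (hZmeas : ∀ n, Measurable (Z n)) (hZmem : ∀ n, 1 ≤ n → ∀ ω, Z n ω ∈ E)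
    (Qm : (EuclideanSpace ℝ (Fin d)) → Measure (EuclideanSpace ℝ (Fin d))) (hQprob : ∀ ξ, IsProbabilityMeasure (Qm ξ))
    (q : (EuclideanSpace ℝ (Fin d)) → (EuclideanSpace ℝ (Fin d)) → ℝ) (hqmeas : Measurable (Function.uncurry q)) (hqnonneg : ∀ a b, 0 ≤ q a b)
    (Cq : ℝ) (hqbdd : ∀ a b, q a b ≤ Cq)
    (qLip : ℝ) (hqLip1 : ∀ a b b' : (EuclideanSpace ℝ (Fin d)), |q a b' - q a b| ≤ qLip * dist b' b)
    (hqLip2 : ∀ a a' b : (EuclideanSpace ℝ (Fin d)), |q a' b - q a b| ≤ qLip * dist a' a)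
    (hQdens : ∀ ξ : (EuclideanSpace ℝ (Fin d)), ∀ B : Set (EuclideanSpace ℝ (Fin d)), MeasurableSet B →
      Qm ξ B = ∫⁻ z in B, ENNReal.ofReal (q ξ z) ∂volume)
    (hZcond : ∀ n, 1 ≤ n → ∀ g : (EuclideanSpace ℝ (Fin d)) → ℝ, Measurable g → (∃ C, ∀ u, |g u| ≤ C) →
      P[fun ω => g (Z n ω)|(⨆ i : Fin n, MeasurableSpace.comap (Zm (i.1+1)) inferInstance) ⊔
          (⨆ i : Fin (n-1), MeasurableSpace.comap (Z (i.1+1)) inferInstance)]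
        =ᵐ[P] fun ω => ∫ u, g u ∂(Qm (Zm n ω)))
    (Bc bc : ℝ) (hBc : 0 < Bc) (hbc : 1 < bc)
    (hcov : ∀ g h : (EuclideanSpace ℝ (Fin d)) → (EuclideanSpace ℝ (Fin d)) → ℝ, Measurable (Function.uncurry g) → Measurable (Function.uncurry h) →
      (∀ a b, |g a b| ≤ 1) → (∀ a b, |h a b| ≤ 1) →
      ∀ m n : ℕ, 1 ≤ m → m ≤ n →
        |∫ ω, g (Zm m ω) (Z m ω) * h (Zm n ω) (Z n ω) ∂P -
          (∫ ω, g (Zm m ω) (Z m ω) ∂P) * (∫ ω, h (Zm n ω) (Z n ω) ∂P)| ≤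
          Bc * bc ^ (-((n:ℝ) - (m:ℝ))) * (1 + bc ^ (-(m:ℝ))))
    (w1 Beta : ℝ) (hw1 : 0 < w1) (hBeta : 0 < Beta)
    (w : ℕ → ℝ) (hw : ∀ j : ℕ, w j = w1 * (j:ℝ) ^ (-Beta))
    (x y : (EuclideanSpace ℝ (Fin d))) (hx : x ∈ E) (hy : y ∈ E)
    (hxdist : max v1 w1 * δ < Metric.infDist x (frontier E))
    (hydist : w1 * δ < Metric.infDist y (frontier E))
    (hpx : 0 < p x) (hαd : Alpha * d < 1) (hβd : 8 * Beta * d < 1) :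
    ∀ᵐ ω ∂P, Tendsto
      (fun n : ℕ => (∑ j ∈ Finset.Icc 1 (n+1), ((w j) ^ (2*d))⁻¹ * (K ((w j)⁻¹ • (Zm j ω - x)) * K ((w j)⁻¹ • (Z j ω - y)))) / (∑ j ∈ Finset.Icc 1 (n+1), ((v j) ^ d)⁻¹ * K ((v j)⁻¹ • (Zm j ω - x))))
      atTop (nhds (q x y)) := by
  classical
  have hRm : Measurable R := Measure.measurable_of_measurable_coe R hRkermeas
  have hCK : 0 < CK := by
    by_contra h
    have : K = fun _ => 0 := by
      funext z; exact le_antisymm ((hKbdd z).trans (not_lt.1 h)) (hKnonneg z)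
    rw [this] at hKint
    simp at hKint
  have hKabs : ∀ z, |K z| ≤ CK := fun z => by rw [abs_of_nonneg (hKnonneg z)]; exact hKbdd z
  -- the filtrations
  have hFle : ∀ n, (⨆ i : Fin n, MeasurableSpace.comap (Zm (i.1+1)) inferInstance) ≤
      (inferInstance : MeasurableSpace Ω) := fun n =>
    iSup_le fun i => (hZmmeas _).comap_le
  have hFle2 : ∀ n, ((⨆ i : Fin n, MeasurableSpace.comap (Zm (i.1+1)) inferInstance) ⊔
          (⨆ i : Fin (n-1), MeasurableSpace.comap (Z (i.1+1)) inferInstance)) ≤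
      (inferInstance : MeasurableSpace Ω) := fun n =>
    sup_le (hFle n) (iSup_le fun i => (hZmeas _).comap_le)
  have hFm : ∀ n i, 1 ≤ i → i ≤ n → ∀ g : EuclideanSpace ℝ (Fin d) → ℝ, Measurable g →
      Measurable[⨆ i : Fin n, MeasurableSpace.comap (Zm (i.1+1)) inferInstance]
        (fun ω => g (Zm i ω)) := by
    intro n i hi hin g hg
    obtain ⟨i', rfl⟩ : ∃ i', i = i' + 1 := ⟨i - 1, by omega⟩
    have h1 : Measurable[MeasurableSpace.comap (Zm (i'+1)) inferInstance]
        (fun ω => g (Zm (i'+1) ω)) := hg.comp (comap_measurable (Zm (i'+1)))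
    exact h1.mono (le_iSup (fun i : Fin n => MeasurableSpace.comap (Zm (i.1+1)) inferInstance)
      ⟨i', by omega⟩) le_rfl
  -- kernel functions
  have hkm : ∀ (a : ℝ) (c : EuclideanSpace ℝ (Fin d)),
      Measurable (fun z => (a ^ d)⁻¹ * K (a⁻¹ • (z - c))) := fun a c =>
    (hKmeas.comp ((measurable_id.sub_const c).const_smul a⁻¹)).const_mul _
  have hk0 : ∀ (a : ℝ), 0 < a → ∀ c z : EuclideanSpace ℝ (Fin d),
      0 ≤ (a ^ d)⁻¹ * K (a⁻¹ • (z - c)) := fun a ha c z =>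
    mul_nonneg (by positivity) (hKnonneg _)
  have hkb : ∀ (a : ℝ), 0 < a → ∀ c z : EuclideanSpace ℝ (Fin d),
      (a ^ d)⁻¹ * K (a⁻¹ • (z - c)) ≤ (a ^ d)⁻¹ * CK := fun a ha c z =>
    mul_le_mul_of_nonneg_left (hKbdd _) (by positivity)
  have hkabs : ∀ (a : ℝ), 0 < a → ∀ c z : EuclideanSpace ℝ (Fin d),
      |(a ^ d)⁻¹ * K (a⁻¹ • (z - c))| ≤ (a ^ d)⁻¹ * CK := fun a ha c z => by
    rw [abs_of_nonneg (hk0 a ha c z)]; exact hkb a ha c z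
  have hrx : Measurable (fun ξ => r ξ x) := hrmeas.comp (measurable_id.prodMk measurable_const)
  have hrabs : ∀ a b, |r a b| ≤ Cr := fun a b => by
    rw [abs_of_nonneg (hrnonneg a b)]; exact hrbdd a b
  have hqabs : ∀ a b, |q a b| ≤ Cq := fun a b => by
    rw [abs_of_nonneg (hqnonneg a b)]; exact hqbdd a b
  have hCr : 0 ≤ Cr := (hrnonneg x x).trans (hrbdd x x)
  -- convergence of the mean of r (Zm n) x
  have hmeanr : Tendsto (fun m : ℕ => ∫ ω, r (Zm (m+1) ω) x ∂P) atTop (nhds (p x)) := by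
    have hlaw := aux_law P Zm hZmmeas R hRm hRprob (fun n hn B hB => by
      have h := hMarkov n hn (B.indicator (fun _ => (1:ℝ))) (measurable_const.indicator hB)
        ⟨1, fun u => by by_cases hu : u ∈ B <;> simp [hu]⟩
      rw [← integral_congr_ae h, integral_condExp (hFle n)])
    have hb : ∀ m : ℕ, 1 ≤ m →
        |∫ ω, r (Zm (m+1) ω) x ∂P - p x| ≤ Cr * (κ * ρ ^ (-(m:ℝ))) := by
      intro m hm
      have i1 : IsProbabilityMeasure (P.map (Zm (m+1))) :=
        Measure.isProbabilityMeasure_map (hZmmeas _).aemeasurable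
      have h1 : ∫ ω, r (Zm (m+1) ω) x ∂P = ∫ ξ, r ξ x ∂(P.map (Zm (m+1))) :=
        (integral_map (hZmmeas _).aemeasurable hrx.aestronglyMeasurable).symm
      rw [h1, hp x hx]
      refine aux_layer _ π _ (fun B hB => ?_) (fun ξ => r ξ x) hrx Cr (fun ξ => hrnonneg ξ x)
        (fun ξ => hrbdd ξ x)
      rw [hlaw m] at i1 ⊢
      exact aux_tv P (Zm 1) (hZmmeas 1) (iterK R m) (aux_iterK_meas R hRm m) i1 (closure E)
        (hZmmem 1 le_rfl) π _ B hB (fun ξ hξ => hTV m hm ξ hξ B hB)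
    have hlim : Tendsto (fun m : ℕ => Cr * (κ * ρ ^ (-(m:ℝ)))) atTop (nhds 0) := by
      have : Tendsto (fun m : ℕ => (ρ⁻¹) ^ m) atTop (nhds 0) :=
        tendsto_pow_atTop_nhds_zero_of_lt_one (by positivity) (inv_lt_one_of_one_lt₀ hρ)
      have h2 := (this.const_mul κ).const_mul Cr
      simp only [mul_zero] at h2
      refine h2.congr fun m => ?_
      rw [Real.rpow_neg (by positivity), Real.rpow_natCast, inv_pow]
    rw [tendsto_iff_dist_tendsto_zero]
    refine squeeze_zero' (Eventually.of_forall fun _ => dist_nonneg) ?_ hlim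
    filter_upwards [eventually_ge_atTop 1] with m hm
    exact hb m hm
  -- the basic estimates for the one-variable kernel terms
  have hT : ∀ (u1 : ℝ) (u : ℕ → ℝ), 0 < u1 → u1 * δ < Metric.infDist x (frontier E) →
      (∀ j, 1 ≤ j → 0 < u j) → (∀ j, 1 ≤ j → u j ≤ u1) →
      Tendsto (fun j => u (j+1)) atTop (nhds 0) →
      ∃ M, 0 ≤ M ∧ (∀ j, 1 ≤ j → ∫ ω, ((u j) ^ d)⁻¹ * K ((u j)⁻¹ • (Zm j ω - x)) ∂P ≤ M) ∧
        (∀ i j, 1 ≤ i → i < j → ∫ ω, (((u i) ^ d)⁻¹ * K ((u i)⁻¹ • (Zm i ω - x))) *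
          (((u j) ^ d)⁻¹ * K ((u j)⁻¹ • (Zm j ω - x))) ∂P ≤ M * M) ∧
        Tendsto (fun j : ℕ => ∫ ω, ((u (j+1)) ^ d)⁻¹ * K ((u (j+1))⁻¹ • (Zm (j+1) ω - x)) ∂P)
          atTop (nhds (p x)) := by
    intro u1 u hu1 hux hu0 hule hulim
    have hball := aux_ball E hEopen x hx (u1 * δ) hux
    have hI : ∀ j, 1 ≤ j → ∀ ξ ∈ closure E,
        |∫ z, ((u j) ^ d)⁻¹ * K ((u j)⁻¹ • (z - x)) ∂(R ξ) - r ξ x| ≤ |rLip| * (u j * δ) := by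
      intro j hj ξ hξ
      have huj := hu0 j hj
      have hle : u j * δ ≤ u1 * δ := mul_le_mul_of_nonneg_right (hule j hj) hδ.le
      have hsub : ∀ z, dist z x < u j * δ → z ∈ E := fun z hz =>
        hball (Metric.mem_ball.2 (hz.trans_le hle))
      have hrξ : Measurable (r ξ) := hrmeas.comp (measurable_const.prodMk measurable_id)
      rw [aux_dens (R ξ) E hEopen.measurableSet (r ξ) hrξ
        (hrnonneg ξ) (hRdens ξ hξ) _ (fun z hz => by
          by_contra hne
          exact hz (hsub z (aux_ksupp K δ hKsupp (u j) huj x z (right_ne_zero_of_mul hne))))]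
      refine aux_kapprox K hKnonneg hKint δ hKsupp (u j) huj x (r ξ) hrξ Cr (hrabs ξ) (r ξ x) _
        (fun z hz => ?_)
      refine (hrLip ξ x hx z (hsub z hz)).trans ?_
      exact mul_le_mul (le_abs_self _) hz.le dist_nonneg (abs_nonneg _)
    set M0 := |rLip| * (u1 * δ) + Cr with hM0
    have hM00 : 0 ≤ M0 := by positivity
    have hIb : ∀ j, 1 ≤ j → ∀ ξ ∈ closure E,
        |∫ z, ((u j) ^ d)⁻¹ * K ((u j)⁻¹ • (z - x)) ∂(R ξ) - 0| ≤ M0 := by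
      intro j hj ξ hξ
      have h1 := hI j hj ξ hξ
      have h2 : |rLip| * (u j * δ) ≤ |rLip| * (u1 * δ) := by
        have := hule j hj
        gcongr
      have h3 := hrabs ξ x
      rw [sub_zero]
      rw [abs_le] at h1 h3 ⊢
      constructor <;> linarith [h1.1, h1.2, h3.1, h3.2]
    have hup : ∀ j, 1 ≤ j → ∀ f : Ω → ℝ, ∀ A : ℝ,
        Measurable[⨆ i : Fin j, MeasurableSpace.comap (Zm (i.1+1)) inferInstance] f →
        (∀ ω, 0 ≤ f ω) → (∀ ω, f ω ≤ A) →
        ∫ ω, f ω * (((u (j+1)) ^ d)⁻¹ * K ((u (j+1))⁻¹ • (Zm (j+1) ω - x))) ∂P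
          ≤ M0 * ∫ ω, f ω ∂P := by
      intro j hj f A hf hf0 hfA
      have hu := hu0 (j+1) (by omega)
      have h := aux_pull (hFle j) P f _ _ (fun _ => 0) A _ 0 M0 hf hf0 hfA
        ((hkm (u (j+1)) x).comp (hZmmeas (j+1))) (fun ω => hkabs _ hu x _)
        (hMarkov j hj _ (hkm (u (j+1)) x) ⟨_, fun z => hkabs _ hu x z⟩)
        measurable_const (fun ω => by simp)
        (fun ω _ => hIb (j+1) (by omega) _ (hZmmem j hj ω))
      simp only [mul_zero, integral_zero, sub_zero] at h
      exact (le_abs_self _).trans h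
    set M := M0 + ((u 1) ^ d)⁻¹ * CK with hM
    have hM1 : 0 ≤ ((u 1) ^ d)⁻¹ * CK := by
      have := hu0 1 le_rfl
      positivity
    have hmean : ∀ j, 1 ≤ j → ∫ ω, ((u j) ^ d)⁻¹ * K ((u j)⁻¹ • (Zm j ω - x)) ∂P ≤ M := by
      intro j hj
      rcases Nat.lt_or_ge 1 j with h | h
      · obtain ⟨j', rfl⟩ : ∃ j', j = j' + 1 := ⟨j - 1, by omega⟩
        have := hup j' (by omega) (fun _ => 1) 1 measurable_const (fun _ => zero_le_one)
          (fun _ => le_rfl)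
        simp only [one_mul, integral_const, probReal_univ, smul_eq_mul, mul_one] at this
        linarith
      · obtain rfl : j = 1 := by omega
        have : ∫ ω, ((u 1) ^ d)⁻¹ * K ((u 1)⁻¹ • (Zm 1 ω - x)) ∂P
            ≤ ∫ _ω, ((u 1) ^ d)⁻¹ * CK ∂P :=
          integral_mono (aux_bdd_int P _ ((hkm (u 1) x).comp (hZmmeas 1)) _
            (fun ω => hkabs _ (hu0 1 le_rfl) x _)) (integrable_const _)
            (fun ω => hkb _ (hu0 1 le_rfl) x _)
        simp only [integral_const, probReal_univ, smul_eq_mul, one_mul] at this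
        linarith
    refine ⟨M, by positivity, hmean, ?_, ?_⟩
    · intro i j hi hij
      obtain ⟨j', rfl⟩ : ∃ j', j = j' + 1 := ⟨j - 1, by omega⟩
      have h1 := hup j' (by omega) (fun ω => ((u i) ^ d)⁻¹ * K ((u i)⁻¹ • (Zm i ω - x))) _
        (hFm j' i hi (by omega) _ (hkm (u i) x)) (fun ω => hk0 _ (hu0 i hi) x _)
        (fun ω => hkb _ (hu0 i hi) x _)
      refine h1.trans (mul_le_mul (by linarith) (hmean i hi)
        (integral_nonneg fun ω => hk0 _ (hu0 i hi) x _) (by positivity))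
    · rw [← tendsto_add_atTop_iff_nat 1]
      have hd1 : ∀ j : ℕ, |∫ ω, ((u (j+1+1)) ^ d)⁻¹ * K ((u (j+1+1))⁻¹ • (Zm (j+1+1) ω - x)) ∂P
          - ∫ ω, r (Zm (j+1) ω) x ∂P| ≤ |rLip| * (u (j+1+1) * δ) := by
        intro j
        have hu := hu0 (j+1+1) (by omega)
        have h := aux_pull (hFle (j+1)) P (fun _ => 1) _ _ (fun ω => r (Zm (j+1) ω) x) 1 _ Cr
          (|rLip| * (u (j+1+1) * δ)) measurable_const (fun _ => zero_le_one) (fun _ => le_rfl)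
          ((hkm (u (j+1+1)) x).comp (hZmmeas (j+1+1))) (fun ω => hkabs _ hu x _)
          (hMarkov (j+1) (by omega) _ (hkm (u (j+1+1)) x) ⟨_, fun z => hkabs _ hu x z⟩)
          (hrx.comp (hZmmeas _)) (fun ω => hrabs _ _)
          (fun ω _ => hI (j+1+1) (by omega) _ (hZmmem (j+1) (by omega) ω))
        simpa using h
      have hz : Tendsto (fun j : ℕ => |rLip| * (u (j+1+1) * δ)) atTop (nhds 0) := by
        have := (((tendsto_add_atTop_iff_nat 1).2 hulim).mul_const δ).const_mul |rLip|
        simpa using this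
      have hz2 : Tendsto (fun j : ℕ =>
          ∫ ω, ((u (j+1+1)) ^ d)⁻¹ * K ((u (j+1+1))⁻¹ • (Zm (j+1+1) ω - x)) ∂P
          - ∫ ω, r (Zm (j+1) ω) x ∂P) atTop (nhds 0) :=
        squeeze_zero_norm hd1 hz
      have := hz2.add hmeanr
      simpa using this
  -- bandwidths
  have hbw : ∀ (u1 A : ℝ) (u : ℕ → ℝ), 0 < u1 → 0 < A → (∀ j : ℕ, u j = u1 * (j:ℝ) ^ (-A)) →
      (∀ j, 1 ≤ j → 0 < u j) ∧ (∀ j, 1 ≤ j → u j ≤ u1) ∧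
      Tendsto (fun j => u (j+1)) atTop (nhds 0) := by
    intro u1 A u hu1 hA hu
    refine ⟨fun j hj => ?_, fun j hj => ?_, ?_⟩
    · have : (0:ℝ) < j := by exact_mod_cast hj
      rw [hu]; positivity
    · rw [hu]
      have : (1:ℝ) ≤ j := by exact_mod_cast hj
      exact mul_le_of_le_one_right hu1.le (Real.rpow_le_one_of_one_le_of_nonpos this (by linarith))
    · have h1 := ((tendsto_rpow_neg_atTop hA).comp tendsto_natCast_atTop_atTop).const_mul u1
      rw [mul_zero] at h1
      have h2 : Tendsto u atTop (nhds 0) := h1.congr fun j => (hu j).symm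
      exact (tendsto_add_atTop_iff_nat 1).2 h2
  obtain ⟨hv0, hvle, hvlim⟩ := hbw v1 Alpha v hv1 hAlpha hv
  obtain ⟨hw0, hwle, hwlim⟩ := hbw w1 Beta w hw1 hBeta hw
  have hb0 : 0 < bc := by linarith
  have ht0 : 0 < bc⁻¹ := inv_pos.2 hb0
  have ht1 : bc⁻¹ < 1 := inv_lt_one_of_one_lt₀ hbc
  -- denominator
  have hden : ∀ᵐ ω ∂P, Tendsto (fun n : ℕ => (∑ j ∈ Finset.range n,
      ((v (j+1)) ^ d)⁻¹ * K ((v (j+1))⁻¹ • (Zm (j+1) ω - x))) / n) atTop (nhds (p x)) := by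
    obtain ⟨M, hM0, hMmean, hMcr, hMlim⟩ := hT v1 v hv1
      (lt_of_le_of_lt (mul_le_mul_of_nonneg_right (le_max_left _ _) hδ.le) hxdist) hv0 hvle hvlim
    set V1 := (v1 ^ d)⁻¹ * CK with hV1
    have hV10 : 0 < V1 := by positivity
    set C1 := V1 * V1 * (2 * Bc) with hC1
    have hC10 : 0 < C1 := by positivity
    have hs0 : 0 ≤ Alpha * d := by positivity
    have hvb : ∀ i j : ℕ, i ≤ j → ((v (i+1)) ^ d)⁻¹ * CK ≤ V1 * ((j:ℝ) + 1) ^ (Alpha * d) := by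
      intro i j hij
      rw [hv, aux_vpow v1 Alpha hv1 (i+1) d (by omega)]
      have h1 : (((i+1 : ℕ):ℝ)) ^ (Alpha * d) ≤ ((j:ℝ) + 1) ^ (Alpha * d) := by
        refine Real.rpow_le_rpow (by positivity) ?_ hs0
        push_cast
        have : (i:ℝ) ≤ j := by exact_mod_cast hij
        linarith
      calc _ = V1 * (((i+1 : ℕ):ℝ)) ^ (Alpha * d) := by rw [hV1]; ring
        _ ≤ _ := mul_le_mul_of_nonneg_left h1 hV10.le
    refine aux_slln P (fun j ω => ((v (j+1)) ^ d)⁻¹ * K ((v (j+1))⁻¹ • (Zm (j+1) ω - x)))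
      (fun j => (hkm _ x).comp (hZmmeas _)) _ (fun j ω => hkabs _ (hv0 (j+1) (by omega)) x _)
      (fun j ω => hk0 _ (hv0 (j+1) (by omega)) x _)
      (Real.sqrt C1 * M + (V1 * M + M * M)) (Alpha * d) (Real.sqrt bc⁻¹) (by positivity) hs0 hαd
      (Real.sqrt_pos.2 ht0) (by rw [Real.sqrt_lt' one_pos]; simpa using ht1) ?_ _ hMlim
    intro i j hij
    have hvi := hv0 (i+1) (by omega)
    have hvj := hv0 (j+1) (by omega)
    have hpos : 0 < ((j:ℝ) + 1) ^ (Alpha * d) := by positivity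
    have hone : 1 ≤ ((j:ℝ) + 1) ^ (Alpha * d) :=
      Real.one_le_rpow (by have : (0:ℝ) ≤ j := by positivity
                           linarith) hs0
    have hmi := hMmean (i+1) (by omega)
    have hmj := hMmean (j+1) (by omega)
    have hmi0 : 0 ≤ ∫ ω, ((v (i+1)) ^ d)⁻¹ * K ((v (i+1))⁻¹ • (Zm (i+1) ω - x)) ∂P :=
      integral_nonneg fun ω => hk0 _ hvi x _
    have hmj0 : 0 ≤ ∫ ω, ((v (j+1)) ^ d)⁻¹ * K ((v (j+1))⁻¹ • (Zm (j+1) ω - x)) ∂P :=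
      integral_nonneg fun ω => hk0 _ hvj x _
    have hprod := mul_le_mul hmi hmj hmj0 hM0
    have hcr0 : 0 ≤ ∫ ω, (((v (i+1)) ^ d)⁻¹ * K ((v (i+1))⁻¹ • (Zm (i+1) ω - x))) *
        (((v (j+1)) ^ d)⁻¹ * K ((v (j+1))⁻¹ • (Zm (j+1) ω - x))) ∂P :=
      integral_nonneg fun ω => mul_nonneg (hk0 _ hvi x _) (hk0 _ hvj x _)
    rcases hij.eq_or_lt with rfl | hlt
    · rw [Nat.sub_self, pow_zero, mul_one]
      have hsq : ∫ ω, (((v (i+1)) ^ d)⁻¹ * K ((v (i+1))⁻¹ • (Zm (i+1) ω - x))) *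
        (((v (i+1)) ^ d)⁻¹ * K ((v (i+1))⁻¹ • (Zm (i+1) ω - x))) ∂P
          ≤ V1 * ((i:ℝ) + 1) ^ (Alpha * d) * M := by
        have hint := aux_bdd_int P _ ((hkm (v (i+1)) x).comp (hZmmeas (i+1))) _
            (fun ω => hkabs _ hvi x _)
        refine le_trans (integral_mono_of_nonneg (g := fun ω => V1 * ((i:ℝ) + 1) ^ (Alpha * d) *
            (((v (i+1)) ^ d)⁻¹ * K ((v (i+1))⁻¹ • (Zm (i+1) ω - x))))
            (Eventually.of_forall fun ω => mul_self_nonneg _) (hint.const_mul _)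
            (Eventually.of_forall fun ω => mul_le_mul_of_nonneg_right
              ((hkb _ hvi x _).trans (hvb i i le_rfl)) (hk0 _ hvi x _))) ?_
        rw [integral_const_mul]
        exact mul_le_mul_of_nonneg_left hmi (by positivity)
      have e1 : 0 ≤ Real.sqrt C1 * M * ((i:ℝ) + 1) ^ (Alpha * d) := by positivity
      have e2 : M * M ≤ M * M * ((i:ℝ) + 1) ^ (Alpha * d) :=
        le_mul_of_one_le_right (by positivity) hone
      have e3 : 0 ≤ V1 * ((i:ℝ) + 1) ^ (Alpha * d) * M := by positivity
      have e4 : 0 ≤ M * M := by positivity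
      refine aux_absdiff _ _ _ hcr0 (mul_nonneg hmi0 hmj0) ?_ ?_
      · refine hsq.trans ?_
        linarith
      · refine hprod.trans ?_
        linarith
    · have hb1 := hMcr (i+1) (j+1) (by omega) (by omega)
      have hb2 := aux_absdiff _ _ _ hcr0 (mul_nonneg hmi0 hmj0) hb1 hprod
      have hb3 := aux_covscale P Zm Z Bc bc hBc hbc hcov
        (fun a _ => ((v (i+1)) ^ d)⁻¹ * K ((v (i+1))⁻¹ • (a - x)))
        (fun a _ => ((v (j+1)) ^ d)⁻¹ * K ((v (j+1))⁻¹ • (a - x)))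
        ((hkm _ x).comp measurable_fst) ((hkm _ x).comp measurable_fst)
        (V1 * ((j:ℝ) + 1) ^ (Alpha * d)) (V1 * ((j:ℝ) + 1) ^ (Alpha * d))
        (by positivity) (by positivity)
        (fun a _ => (hkabs _ hvi x a).trans (hvb i j hij))
        (fun a _ => (hkabs _ hvj x a).trans (hvb j j le_rfl)) (i+1) (j+1) (by omega) (by omega)
      rw [Nat.add_sub_add_right] at hb3
      have hT0 : 0 < (bc⁻¹) ^ (j - i) := by positivity
      have hq : Real.sqrt (bc⁻¹) ^ (j - i) * Real.sqrt (bc⁻¹) ^ (j - i) = (bc⁻¹) ^ (j - i) := by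
        rw [← mul_pow, Real.mul_self_sqrt ht0.le]
      have hq2 := Real.mul_self_sqrt hC10.le
      have hfin : |∫ ω, (((v (i+1)) ^ d)⁻¹ * K ((v (i+1))⁻¹ • (Zm (i+1) ω - x))) *
          (((v (j+1)) ^ d)⁻¹ * K ((v (j+1))⁻¹ • (Zm (j+1) ω - x))) ∂P -
          (∫ ω, ((v (i+1)) ^ d)⁻¹ * K ((v (i+1))⁻¹ • (Zm (i+1) ω - x)) ∂P) *
          (∫ ω, ((v (j+1)) ^ d)⁻¹ * K ((v (j+1))⁻¹ • (Zm (j+1) ω - x)) ∂P)|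
          ≤ Real.sqrt C1 * M * ((j:ℝ) + 1) ^ (Alpha * d) * Real.sqrt (bc⁻¹) ^ (j - i) := by
        refine abs_le_of_sq_le_sq' ?_ (by positivity) |> abs_le.2
        rw [← sq_abs]
        calc _ = _ * _ := sq _
          _ ≤ _ := mul_le_mul hb3 hb2 (abs_nonneg _) (by positivity)
          _ = (Real.sqrt C1 * Real.sqrt C1) * (M * M) * (((j:ℝ) + 1) ^ (Alpha * d)) ^ 2 *
            (Real.sqrt (bc⁻¹) ^ (j - i) * Real.sqrt (bc⁻¹) ^ (j - i)) := by
              rw [hq, hq2, hC1]; ring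
          _ = _ := by ring
      refine hfin.trans ?_
      have : Real.sqrt C1 * M ≤ Real.sqrt C1 * M + (V1 * M + M * M) := by
        have : 0 ≤ V1 * M + M * M := by positivity
        linarith
      gcongr
  -- numerator
  have hnum : ∀ᵐ ω ∂P, Tendsto (fun n : ℕ => (∑ j ∈ Finset.range n,
      ((w (j+1)) ^ (2*d))⁻¹ * (K ((w (j+1))⁻¹ • (Zm (j+1) ω - x)) *
        K ((w (j+1))⁻¹ • (Z (j+1) ω - y)))) / n) atTop (nhds (q x y * p x)) := by
    obtain ⟨M, hM0, hMmean, hMcr, hMlim⟩ := hT w1 w hw1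
      (lt_of_le_of_lt (mul_le_mul_of_nonneg_right (le_max_right _ _) hδ.le) hxdist) hw0 hwle hwlim
    have hmeas2 : ∀ a : ℝ, Measurable (Function.uncurry fun b c : EuclideanSpace ℝ (Fin d) =>
        (a ^ (2*d))⁻¹ * (K (a⁻¹ • (b - x)) * K (a⁻¹ • (c - y)))) := fun a =>
      (((hKmeas.comp ((measurable_id.sub_const x).const_smul a⁻¹)).comp measurable_fst).mul
        ((hKmeas.comp ((measurable_id.sub_const y).const_smul a⁻¹)).comp measurable_snd)).const_mul _
    have hnn2 : ∀ a : ℝ, 0 < a → ∀ b c : EuclideanSpace ℝ (Fin d),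
        0 ≤ (a ^ (2*d))⁻¹ * (K (a⁻¹ • (b - x)) * K (a⁻¹ • (c - y))) := fun a ha b c =>
      mul_nonneg (by positivity) (mul_nonneg (hKnonneg _) (hKnonneg _))
    have habs2 : ∀ a : ℝ, 0 < a → ∀ b c : EuclideanSpace ℝ (Fin d),
        |(a ^ (2*d))⁻¹ * (K (a⁻¹ • (b - x)) * K (a⁻¹ • (c - y)))| ≤
          (a ^ (2*d))⁻¹ * (CK * CK) := fun a ha b c => by
      rw [abs_of_nonneg (hnn2 a ha b c)]
      refine mul_le_mul_of_nonneg_left ?_ (by positivity)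
      exact mul_le_mul (hKbdd _) (hKbdd _) (hKnonneg _) hCK.le
    set V1 := (w1 ^ (2*d))⁻¹ * (CK * CK) with hV1
    have hV10 : 0 < V1 := by positivity
    set s0 := Beta * ((2 * d : ℕ) : ℝ) with hs0def
    have hs0 : 0 ≤ s0 := by positivity
    have hdpos : (1:ℝ) ≤ d := by exact_mod_cast hd
    have hs1 : s0 * 2 < 1 := by
      rw [hs0def]; push_cast
      have : 0 < Beta * d := by positivity
      nlinarith
    have hvb : ∀ i j : ℕ, i ≤ j →
        ((w (i+1)) ^ (2*d))⁻¹ * (CK * CK) ≤ V1 * ((j:ℝ) + 1) ^ s0 := by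
      intro i j hij
      rw [hw, aux_vpow w1 Beta hw1 (i+1) (2*d) (by omega)]
      have h1 : (((i+1 : ℕ):ℝ)) ^ s0 ≤ ((j:ℝ) + 1) ^ s0 := by
        refine Real.rpow_le_rpow (by positivity) ?_ hs0
        push_cast
        have : (i:ℝ) ≤ j := by exact_mod_cast hij
        linarith
      calc _ = V1 * (((i+1 : ℕ):ℝ)) ^ s0 := by rw [hV1]; ring
        _ ≤ _ := mul_le_mul_of_nonneg_left h1 hV10.le
    have hmeanb : Tendsto (fun j : ℕ => ∫ ω, ((w (j+1)) ^ (2*d))⁻¹ *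
        (K ((w (j+1))⁻¹ • (Zm (j+1) ω - x)) * K ((w (j+1))⁻¹ • (Z (j+1) ω - y))) ∂P)
        atTop (nhds (q x y * p x)) := by
      have hb : ∀ j : ℕ, |∫ ω, ((w (j+1)) ^ (2*d))⁻¹ *
          (K ((w (j+1))⁻¹ • (Zm (j+1) ω - x)) * K ((w (j+1))⁻¹ • (Z (j+1) ω - y))) ∂P
          - q x y * ∫ ω, ((w (j+1)) ^ d)⁻¹ * K ((w (j+1))⁻¹ • (Zm (j+1) ω - x)) ∂P|
          ≤ (2 * |qLip| * (w (j+1) * δ)) * M := by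
        intro j
        have hwj := hw0 (j+1) (by omega)
        have h := aux_pull (hFle2 (j+1)) P
          (fun ω => ((w (j+1)) ^ d)⁻¹ * K ((w (j+1))⁻¹ • (Zm (j+1) ω - x))) _ _
          (fun _ => q x y) _ _ Cq (2 * |qLip| * (w (j+1) * δ))
          ((hFm (j+1) (j+1) (by omega) le_rfl _ (hkm (w (j+1)) x)).mono le_sup_left le_rfl)
          (fun ω => hk0 _ hwj x _) (fun ω => hkb _ hwj x _)
          ((hkm (w (j+1)) y).comp (hZmeas (j+1))) (fun ω => hkabs _ hwj y _)
          (hZcond (j+1) (by omega) _ (hkm (w (j+1)) y) ⟨_, fun z => hkabs _ hwj y z⟩)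
          measurable_const (fun _ => hqabs x y)
          (fun ω hne => by
            have hd1 := aux_ksupp K δ hKsupp _ hwj x _ (right_ne_zero_of_mul hne)
            have hqm : Measurable (q (Zm (j+1) ω)) :=
              hqmeas.comp (measurable_const.prodMk measurable_id)
            rw [aux_dens (Qm (Zm (j+1) ω)) Set.univ MeasurableSet.univ (q (Zm (j+1) ω)) hqm
              (hqnonneg _) (fun B _ hB => hQdens _ B hB) _ (fun z hz => absurd trivial hz)]
            refine aux_kapprox K hKnonneg hKint δ hKsupp _ hwj y _ hqm Cq (hqabs _) _ _
              (fun z hz => ?_)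
            have a1 : |q (Zm (j+1) ω) z - q (Zm (j+1) ω) y| ≤ |qLip| * (w (j+1) * δ) :=
              (hqLip1 _ y z).trans (mul_le_mul (le_abs_self _) hz.le dist_nonneg (abs_nonneg _))
            have a2 : |q (Zm (j+1) ω) y - q x y| ≤ |qLip| * (w (j+1) * δ) :=
              (hqLip2 x _ y).trans (mul_le_mul (le_abs_self _) hd1.le dist_nonneg (abs_nonneg _))
            have a3 := abs_sub_le (q (Zm (j+1) ω) z) (q (Zm (j+1) ω) y) (q x y)
            linarith)
        have hL0 : 0 ≤ 2 * |qLip| * (w (j+1) * δ) := by positivity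
        have h' := h.trans (mul_le_mul_of_nonneg_left (hMmean (j+1) (by omega)) hL0)
        rw [integral_mul_const, mul_comm _ (q x y)] at h'
        have hfe : (fun ω => ((w (j+1)) ^ (2*d))⁻¹ *
          (K ((w (j+1))⁻¹ • (Zm (j+1) ω - x)) * K ((w (j+1))⁻¹ • (Z (j+1) ω - y)))) =
          fun ω => (((w (j+1)) ^ d)⁻¹ * K ((w (j+1))⁻¹ • (Zm (j+1) ω - x))) *
            (((w (j+1)) ^ d)⁻¹ * K ((w (j+1))⁻¹ • (Z (j+1) ω - y))) := by
          funext ω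
          rw [two_mul, pow_add, mul_inv]; ring
        rw [hfe]
        exact h'
      have hz : Tendsto (fun j : ℕ => (2 * |qLip| * (w (j+1) * δ)) * M) atTop (nhds 0) := by
        have := ((hwlim.mul_const δ).const_mul (2 * |qLip|)).mul_const M
        simpa using this
      have := (squeeze_zero_norm hb hz).add (hMlim.const_mul (q x y))
      simpa using this
    refine aux_slln P (fun j ω => ((w (j+1)) ^ (2*d))⁻¹ * (K ((w (j+1))⁻¹ • (Zm (j+1) ω - x)) *
        K ((w (j+1))⁻¹ • (Z (j+1) ω - y))))
      (fun j => (hmeas2 _).comp ((hZmmeas _).prodMk (hZmeas _))) _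
      (fun j ω => habs2 _ (hw0 (j+1) (by omega)) _ _)
      (fun j ω => hnn2 _ (hw0 (j+1) (by omega)) _ _)
      (V1 * V1 * (2 * Bc)) (s0 * 2) (bc⁻¹) (by positivity) (by positivity) hs1
      ht0 ht1 ?_ _ hmeanb
    intro i j hij
    have hb3 := aux_covscale P Zm Z Bc bc hBc hbc hcov _ _
        (hmeas2 (w (i+1))) (hmeas2 (w (j+1)))
        (V1 * ((j:ℝ) + 1) ^ s0) (V1 * ((j:ℝ) + 1) ^ s0)
        (by positivity) (by positivity)
        (fun a b => (habs2 _ (hw0 (i+1) (by omega)) a b).trans (hvb i j hij))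
        (fun a b => (habs2 _ (hw0 (j+1) (by omega)) a b).trans (hvb j j le_rfl))
        (i+1) (j+1) (by omega) (by omega)
    rw [Nat.add_sub_add_right] at hb3
    refine hb3.trans (le_of_eq ?_)
    have he : ((j:ℝ) + 1) ^ (s0 * 2) = (((j:ℝ) + 1) ^ s0) ^ 2 := by
      rw [Real.rpow_mul (by positivity) s0 2, Real.rpow_two]
    rw [he]
    ring
  filter_upwards [hden, hnum] with ω h1 h2
  have h3 := (h2.div h1 hpx.ne').comp (tendsto_add_atTop_nat 1)
  rw [mul_div_cancel_right₀ _ hpx.ne'] at h3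
  refine h3.congr fun n => ?_
  simp only [Function.comp, Pi.div_apply]
  rw [aux_sumIcc, aux_sumIcc, div_div_div_cancel_right₀]
  positivity
end

section
/- Let x ∈ E with v₁·δ < dist(x, ∂E). If α·d < 1, then p̂ₙ(x) → p(x) almost surely as n → ∞. -/
open MeasureTheory ProbabilityTheory Filter

lemma slln_aux {Ω : Type*} [m0 : MeasurableSpace Ω] (P : Measure Ω) [IsProbabilityMeasure P]
    (F : Filtration ℕ m0) (D : ℕ → Ω → ℝ)
    (hadap : ∀ i, StronglyMeasurable[F (i+1)] (D i))
    (C : ℕ → ℝ) (hC : ∀ i ω, |D i ω| ≤ C i)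
    (hcond : ∀ i, P[D i | F i] =ᵐ[P] 0)
    (V : ℕ → ℝ) (hV : ∀ i, ∫ ω, (D i ω)^2 ∂P ≤ V i)
    (hsum : Summable fun i : ℕ => V i / ((i:ℝ)+1)^2) :
    ∀ᵐ ω ∂P, Tendsto (fun n : ℕ => (n:ℝ)⁻¹ * ∑ i ∈ Finset.range n, D i ω) atTop (nhds 0) := by
  set M : ℕ → Ω → ℝ := fun n ω => ∑ i ∈ Finset.range n, D i ω / ((i:ℝ)+1) with hM
  have hMs : ∀ n ω, M (n+1) ω = M n ω + D n ω / ((n:ℝ)+1) := by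
    intro n ω; simp only [hM, Finset.sum_range_succ]
  have hMmeas : ∀ n, StronglyMeasurable[F n] (M n) := by
    intro n
    induction n with
    | zero => simpa [hM] using stronglyMeasurable_const
    | succ n ih =>
      have : M (n+1) = fun ω => M n ω + D n ω / ((n:ℝ)+1) := funext (hMs n)
      rw [this]
      simp only [div_eq_mul_inv]
      exact (ih.mono (F.mono n.le_succ)).add (StronglyMeasurable.mul_const (hadap n) _)
  have hMb : ∀ n, ∃ B, ∀ ω, |M n ω| ≤ B := by
    intro n
    refine ⟨∑ i ∈ Finset.range n, C i / ((i:ℝ)+1), fun ω => ?_⟩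
    refine (Finset.abs_sum_le_sum_abs _ _).trans (Finset.sum_le_sum fun i _ => ?_)
    rw [abs_div, abs_of_pos (by positivity : (0:ℝ) < (i:ℝ)+1)]
    gcongr; exact hC i ω
  have intb : ∀ f : Ω → ℝ, StronglyMeasurable f → (∃ B, ∀ ω, |f ω| ≤ B) → Integrable f P := by
    rintro f hf ⟨B, hB⟩
    exact Integrable.of_bound hf.aestronglyMeasurable B (Eventually.of_forall hB)
  have hMm0 : ∀ n, StronglyMeasurable (M n) := fun n => (hMmeas n).mono (F.le n)
  have hDm0 : ∀ n, StronglyMeasurable (D n) := fun n => (hadap n).mono (F.le _)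
  have hMi : ∀ n, Integrable (M n) P := fun n => intb _ (hMm0 n) (hMb n)
  have hDi : ∀ n, Integrable (D n) P := fun n => intb _ (hDm0 n) ⟨_, hC n⟩
  have hM2i : ∀ n, Integrable (fun ω => (M n ω)^2) P := fun n => by
    obtain ⟨B, hB⟩ := hMb n
    refine intb _ ((hMm0 n).pow 2) ⟨B^2, fun ω => ?_⟩
    rw [abs_pow]; exact pow_le_pow_left₀ (abs_nonneg _) (hB ω) 2
  have hD2i : ∀ n, Integrable (fun ω => (D n ω)^2) P := fun n => by
    refine intb _ ((hDm0 n).pow 2) ⟨(C n)^2, fun ω => ?_⟩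
    rw [abs_pow]; exact pow_le_pow_left₀ (abs_nonneg _) (hC n ω) 2
  have hMDi : ∀ n, Integrable (M n * D n) P := fun n => by
    obtain ⟨B, hB⟩ := hMb n
    refine intb _ ((hMm0 n).mul (hDm0 n)) ⟨B * C n, fun ω => ?_⟩
    simp only [Pi.mul_apply]
    rw [abs_mul]; exact mul_le_mul (hB ω) (hC n ω) (abs_nonneg _) ((abs_nonneg _).trans (hB ω))
  have horth : ∀ n, ∫ ω, M n ω * D n ω ∂P = 0 := by
    intro n
    have h1 := condExp_mul_of_stronglyMeasurable_left (hMmeas n) (hMDi n) (hDi n)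
    have h2 : ∫ ω, (P[M n * D n | F n]) ω ∂P = ∫ ω, (M n * D n) ω ∂P := integral_condExp (F.le n)
    have h3 : ∫ ω, (P[M n * D n | F n]) ω ∂P = 0 := by
      apply integral_eq_zero_of_ae
      filter_upwards [h1, hcond n] with ω a b
      rw [a, Pi.mul_apply, b]; simp
    rw [h3] at h2
    exact h2.symm
  have hM2 : ∀ n, ∫ ω, (M n ω)^2 ∂P ≤ ∑ i ∈ Finset.range n, V i / ((i:ℝ)+1)^2 := by
    intro n
    induction n with
    | zero => simp [hM]
    | succ n ih =>
      rw [Finset.sum_range_succ]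
      have e : (fun ω => (M (n+1) ω)^2) = fun ω => (M n ω)^2 + ((2/((n:ℝ)+1)) * (M n * D n) ω
          + (1/((n:ℝ)+1)^2) * (D n ω)^2) := by
        funext ω; rw [hMs, Pi.mul_apply]; field_simp; ring
      have ia : Integrable (fun ω => (2/((n:ℝ)+1)) * (M n * D n) ω
          + (1/((n:ℝ)+1)^2) * (D n ω)^2) P := ((hMDi n).const_mul _).add ((hD2i n).const_mul _)
      rw [e, integral_add (hM2i n) ia, integral_add ((hMDi n).const_mul _) ((hD2i n).const_mul _), integral_const_mul, integral_const_mul]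
      have := horth n
      simp only [Pi.mul_apply]
      rw [this, mul_zero, zero_add, div_mul_eq_mul_div, one_mul]
      gcongr; exact hV n
  have hV0 : ∀ i, 0 ≤ V i := fun i => (integral_nonneg fun ω => sq_nonneg _).trans (hV i)
  have hmart : Martingale M F P := by
    refine martingale_of_condExp_sub_eq_zero_nat (fun n => hMmeas n) hMi fun i => ?_
    have e : M (i+1) - M i = ((i:ℝ)+1)⁻¹ • D i := by
      funext ω; simp only [Pi.sub_apply, hMs, Pi.smul_apply, smul_eq_mul]; ring
    rw [e]
    refine (condExp_smul _ _ _).trans ?_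
    filter_upwards [hcond i] with ω h
    simp [h]
  set S := ∑' i : ℕ, V i / ((i:ℝ)+1)^2
  have hS : ∀ n, ∫ ω, (M n ω)^2 ∂P ≤ S := fun n => (hM2 n).trans
    (hsum.sum_le_tsum _ fun i _ => div_nonneg (hV0 i) (by positivity))
  have hbd : ∀ n, eLpNorm (M n) 1 P ≤ ((1 + S).toNNReal : ENNReal) := by
    intro n
    rw [eLpNorm_one_eq_lintegral_enorm, ← ofReal_integral_norm_eq_lintegral_enorm (hMi n)]
    apply ENNReal.ofReal_le_ofReal
    calc ∫ ω, ‖M n ω‖ ∂P ≤ ∫ ω, (1 + (M n ω)^2) ∂P := by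
          apply integral_mono (hMi n).norm ((integrable_const _).add (hM2i n))
          intro ω
          change |M n ω| ≤ 1 + (M n ω)^2
          nlinarith [sq_abs (M n ω), sq_nonneg (|M n ω| - 1), abs_nonneg (M n ω)]
      _ = 1 + ∫ ω, (M n ω)^2 ∂P := by
          rw [integral_add (integrable_const _) (hM2i n)]; simp
      _ ≤ _ := by linarith [hS n]
  filter_upwards [hmart.submartingale.exists_ae_tendsto_of_bdd hbd] with ω ⟨c, hc⟩
  have hc1 := hc.cesaro
  have hkey : ∀ n : ℕ, ∑ i ∈ Finset.range n, D i ω = n * M n ω - ∑ i ∈ Finset.range n, M i ω := by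
    intro n
    induction n with
    | zero => simp
    | succ n ih =>
      rw [Finset.sum_range_succ, Finset.sum_range_succ, ih, hMs]; push_cast; field_simp; ring
  have : Tendsto (fun n : ℕ => M n ω - (n:ℝ)⁻¹ * ∑ i ∈ Finset.range n, M i ω) atTop (nhds 0) := by
    simpa using hc.sub hc1
  refine this.congr' ?_
  filter_upwards [eventually_gt_atTop 0] with n hn
  have : (n:ℝ) ≠ 0 := by positivity
  rw [hkey]; field_simp

lemma chain_aux {Ω S : Type*} [m0 : MeasurableSpace Ω] [MeasurableSpace S]
    (P : Measure Ω) [IsProbabilityMeasure P]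
    (Z : ℕ → Ω → S) (hZ : ∀ n, Measurable (Z n)) (A : Set S)
    (hZA : ∀ n, 1 ≤ n → ∀ ω, Z n ω ∈ A) (κ : Kernel S S) [IsMarkovKernel κ]
    (hMarkov : ∀ n, 1 ≤ n → ∀ g : S → ℝ, Measurable g → (∃ C, ∀ u, |g u| ≤ C) →
      P[fun ω => g (Z (n+1) ω)|⨆ i : Fin n, MeasurableSpace.comap (Z (i.1+1)) inferInstance]
        =ᵐ[P] fun ω => ∫ u, g u ∂(κ (Z n ω)))
    (g : ℕ → S → ℝ) (hg : ∀ i, Measurable (g i)) (C : ℕ → ℝ) (hC : ∀ i u, |g i u| ≤ C i)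
    (V : ℕ → ℝ) (hV : ∀ i, ∀ ξ ∈ A, ∫ u, (g i u)^2 ∂(κ ξ) ≤ V i)
    (hsum : Summable fun i : ℕ => V i / ((i:ℝ)+1)^2) :
    ∀ᵐ ω ∂P, Tendsto (fun n : ℕ => (n:ℝ)⁻¹ * ∑ i ∈ Finset.range n,
      (g i (Z (i+2) ω) - ∫ u, g i u ∂(κ (Z (i+1) ω)))) atTop (nhds 0) := by
  let F : Filtration ℕ m0 :=
    { seq := fun n => ⨆ i : Fin (n+1), MeasurableSpace.comap (Z (i.1+1)) inferInstance
      mono' := by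
        intro a b hab
        refine iSup_le fun i => ?_
        exact le_iSup (fun i : Fin (b+1) => MeasurableSpace.comap (Z (i.1+1)) inferInstance)
          ⟨i.1, by omega⟩
      le' := fun n => iSup_le fun i => (hZ _).comap_le }
  have hZF : ∀ n, Measurable[F n] (Z (n+1)) := by
    intro n
    have : MeasurableSpace.comap (Z (n+1)) inferInstance ≤ F n :=
      le_iSup (fun i : Fin (n+1) => MeasurableSpace.comap (Z (i.1+1)) inferInstance)
          ⟨n, by omega⟩
    exact (comap_measurable (Z (n+1))).mono this le_rfl
  have hAg : ∀ i, Measurable fun ξ => ∫ u, g i u ∂(κ ξ) := fun i =>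
    ((hg i).stronglyMeasurable.integral_kernel).measurable
  have hAgb : ∀ i ξ, |∫ u, g i u ∂(κ ξ)| ≤ C i := fun i ξ => by
    have := norm_integral_le_of_norm_le_const (μ := κ ξ) (f := g i) (C := C i)
      (Eventually.of_forall (hC i))
    simpa using this
  have hgi : ∀ i ξ, Integrable (g i) (κ ξ) := fun i ξ =>
    Integrable.of_bound (hg i).aestronglyMeasurable (C i) (Eventually.of_forall (hC i))
  have hsqb : ∀ i u, |(g i u)^2| ≤ (C i)^2 := fun i u => by
    rw [abs_pow]; exact pow_le_pow_left₀ (abs_nonneg _) (hC i u) 2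
  have hg2i : ∀ i ξ, Integrable (fun u => (g i u)^2) (κ ξ) := fun i ξ =>
    Integrable.of_bound ((hg i).pow_const 2).aestronglyMeasurable ((C i)^2)
      (Eventually.of_forall (hsqb i))
  have hjen : ∀ i ξ, (∫ u, g i u ∂(κ ξ))^2 ≤ ∫ u, (g i u)^2 ∂(κ ξ) := by
    intro i ξ
    set c := ∫ u, g i u ∂(κ ξ) with hc
    have h0 : 0 ≤ ∫ u, ((g i u)^2 - (2*c* g i u - c^2)) ∂(κ ξ) := by
      apply integral_nonneg; intro u
      change 0 ≤ (g i u)^2 - (2*c* g i u - c^2)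
      nlinarith [sq_nonneg (g i u - c)]
    have ia : Integrable (fun u => 2*c* g i u - c^2) (κ ξ) :=
      ((hgi i ξ).const_mul _).sub (integrable_const _)
    rw [integral_sub (hg2i i ξ) ia, integral_sub ((hgi i ξ).const_mul _) (integrable_const _),
      integral_const_mul, ← hc] at h0
    simp at h0
    nlinarith
  have hE2 : ∀ i, ∫ ω, (g i (Z (i+2) ω))^2 ∂P ≤ V i := by
    intro i
    have h1 := hMarkov (i+1) (by omega) (fun u => (g i u)^2) ((hg i).pow_const 2) ⟨_, hsqb i⟩
    have h2 := integral_condExp (μ := P) (f := fun ω => (g i (Z (i+1+1) ω))^2) (F.le i)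
    have h3 := integral_congr_ae h1
    calc ∫ ω, (g i (Z (i+2) ω))^2 ∂P = ∫ ω, ∫ u, (g i u)^2 ∂(κ (Z (i+1) ω)) ∂P := h2.symm.trans h3
      _ ≤ ∫ ω, V i ∂P := by
        apply integral_mono_of_nonneg
        · exact Eventually.of_forall fun ω => integral_nonneg fun u => sq_nonneg _
        · exact integrable_const _
        · exact Eventually.of_forall fun ω => hV i _ (hZA _ (by omega) ω)
      _ = V i := by simp
  have hsub : ∀ i ω, |g i (Z (i+2) ω) - ∫ u, g i u ∂(κ (Z (i+1) ω))| ≤ 2 * C i := fun i ω => by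
    have a := hC i (Z (i+2) ω)
    have b := hAgb i (Z (i+1) ω)
    rw [abs_le] at *
    constructor <;> linarith
  refine slln_aux P F (fun i ω => g i (Z (i+2) ω) - ∫ u, g i u ∂(κ (Z (i+1) ω))) ?_
    (fun i => 2 * C i) hsub ?_ (fun i => 4 * V i) ?_ ?_
  · intro i
    have a : Measurable[F (i+1)] fun ω => g i (Z (i+2) ω) := (hg i).comp (hZF (i+1))
    have b : Measurable[F (i+1)] fun ω => ∫ u, g i u ∂(κ (Z (i+1) ω)) :=
      (hAg i).comp ((hZF i).mono (F.mono i.le_succ) le_rfl)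
    exact (a.sub b).stronglyMeasurable
  · intro i
    have b : StronglyMeasurable[F i] fun ω => ∫ u, g i u ∂(κ (Z (i+1) ω)) :=
      Measurable.stronglyMeasurable ((hAg i).comp (hZF i))
    have i1 : Integrable (fun ω => g i (Z (i+2) ω)) P :=
      Integrable.of_bound ((hg i).comp (hZ _)).aestronglyMeasurable (C i)
        (Eventually.of_forall fun ω => hC i _)
    have i2 : Integrable (fun ω => ∫ u, g i u ∂(κ (Z (i+1) ω))) P :=
      Integrable.of_bound ((hAg i).comp (hZ _)).aestronglyMeasurable (C i)
        (Eventually.of_forall fun ω => hAgb i _)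
    have h1 := hMarkov (i+1) (by omega) (g i) (hg i) ⟨_, hC i⟩
    have h2 := condExp_sub i1 i2 (F i)
    have h3 := condExp_of_stronglyMeasurable (F.le i) b i2
    rw [h3] at h2
    refine h2.trans ?_
    filter_upwards [h1] with ω hω
    have hω' : (P[fun ω => g i (Z (i+2) ω) | F i]) ω = ∫ u, g i u ∂(κ (Z (i+1) ω)) := hω
    simp [hω']
  · intro i
    have i1 : Integrable (fun ω => 2 * (g i (Z (i+2) ω))^2) P :=
      (Integrable.of_bound (((hg i).pow_const 2).comp (hZ (i+2))).aestronglyMeasurable ((C i)^2)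
        (Eventually.of_forall fun ω => hsqb i _)).const_mul 2
    calc ∫ ω, (g i (Z (i+2) ω) - ∫ u, g i u ∂(κ (Z (i+1) ω)))^2 ∂P
        ≤ ∫ ω, (2 * (g i (Z (i+2) ω))^2 + 2 * V i) ∂P := by
          apply integral_mono_of_nonneg
          · exact Eventually.of_forall fun ω => sq_nonneg _
          · exact i1.add (integrable_const _)
          · refine Eventually.of_forall fun ω => ?_
            have a := (hjen i (Z (i+1) ω)).trans (hV i _ (hZA _ (by omega) ω))
            dsimp only
            nlinarith [sq_nonneg (g i (Z (i+2) ω) + ∫ u, g i u ∂(κ (Z (i+1) ω)))]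
      _ = 2 * ∫ ω, (g i (Z (i+2) ω))^2 ∂P + 2 * V i := by
          rw [integral_add i1 (integrable_const _), integral_const_mul]; simp
      _ ≤ 4 * V i := by linarith [hE2 i]
  · simpa [mul_div_assoc] using hsum.mul_left 4

lemma tv_aux {S : Type*} [MeasurableSpace S] (μ ν : Measure S) [IsProbabilityMeasure μ]
    [IsProbabilityMeasure ν] (h : S → ℝ) (hm : Measurable h) (h0 : ∀ u, 0 ≤ h u) (C : ℝ)
    (hC : ∀ u, h u ≤ C) (η : ℝ)
    (hη : ∀ B, MeasurableSet B → |(μ B).toReal - (ν B).toReal| ≤ η) :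
    |∫ u, h u ∂μ - ∫ u, h u ∂ν| ≤ η * |C| := by
  have key : ∀ μ : Measure S, IsProbabilityMeasure μ →
      ∫ u, h u ∂μ = ∫ t in Set.Ioc 0 C, μ.real {a | t ≤ h a} ∧
      IntegrableOn (fun t => μ.real {a | t ≤ h a}) (Set.Ioc 0 C) volume := by
    intro μ _
    constructor
    · refine Integrable.integral_eq_integral_Ioc_meas_le ?_ (Eventually.of_forall h0)
        (Eventually.of_forall hC)
      refine Integrable.of_bound hm.aestronglyMeasurable C (Eventually.of_forall fun u => ?_)
      rw [Real.norm_eq_abs, abs_of_nonneg (h0 u)]; exact hC u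
    · have hanti : Antitone (fun t => μ.real {a | t ≤ h a}) := by
        intro s t hst
        exact measureReal_mono (fun a ha => le_trans hst ha)
      refine Measure.integrableOn_of_bounded (M := 1) (by simp) hanti.measurable.aestronglyMeasurable ?_
      refine Eventually.of_forall fun t => ?_
      rw [Real.norm_eq_abs, abs_of_nonneg measureReal_nonneg]; exact measureReal_le_one
  obtain ⟨a1, a2⟩ := key μ inferInstance
  obtain ⟨b1, b2⟩ := key ν inferInstance
  rw [a1, b1, ← integral_sub a2 b2]
  have hη0 : 0 ≤ η := (abs_nonneg _).trans (hη _ MeasurableSet.univ)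
  have hb : ‖∫ t in Set.Ioc 0 C, (μ.real {a | t ≤ h a} - ν.real {a | t ≤ h a})‖
      ≤ η * volume.real (Set.Ioc 0 C) :=
    norm_setIntegral_le_of_norm_le_const (by simp) fun t _ =>
      hη {a | t ≤ h a} (hm measurableSet_Ici)
  refine hb.trans ?_
  gcongr
  rw [Real.volume_real_Ioc]
  simp [le_abs_self]

noncomputable def opA {S : Type*} [MeasurableSpace S] (κ : Kernel S S) (h : S → ℝ) : S → ℝ :=
  fun ξ => ∫ u, h u ∂(κ ξ)

lemma iterK_prob {S : Type*} [MeasurableSpace S] (κ : Kernel S S) [IsMarkovKernel κ] (m : ℕ) (y : S) :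
    IsProbabilityMeasure (iterK (fun ξ => κ ξ) m y) := by
  induction m with
  | zero => simp only [iterK]; infer_instance
  | succ m ih =>
    simp only [iterK]
    have : IsProbabilityMeasure ((iterK (fun ξ => κ ξ) m y).bind κ) := inferInstance
    exact this

lemma opA_iter {S : Type*} [MeasurableSpace S] (κ : Kernel S S) [IsMarkovKernel κ] (m : ℕ) (y : S)
    (h : S → ℝ) (hm : Measurable h) (C : ℝ) (hC : ∀ u, |h u| ≤ C) :
    (opA κ)^[m] h y = ∫ u, h u ∂(iterK (fun ξ => κ ξ) m y) := by
  induction m generalizing h with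
  | zero => simp [iterK, integral_dirac' _ _ hm.stronglyMeasurable]
  | succ m ih =>
    have hA : Measurable (opA κ h) := (hm.stronglyMeasurable.integral_kernel).measurable
    rw [Function.iterate_succ_apply, ih (opA κ h) hA]
    · have := iterK_prob κ m y
      have := iterK_prob κ (m+1) y
      have e : (κ ∘ₖ Kernel.const Unit (iterK (fun ξ => κ ξ) m y)) ()
          = iterK (fun ξ => κ ξ) (m+1) y := by
        rw [Kernel.comp_apply]; simp only [iterK, Kernel.const_apply]
      have hi : Integrable h (iterK (fun ξ => κ ξ) (m+1) y) :=
        Integrable.of_bound hm.aestronglyMeasurable C (Eventually.of_forall hC)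
      rw [← e] at hi ⊢
      rw [Kernel.integral_comp hi]
      rfl
    · intro ξ
      have := norm_integral_le_of_norm_le_const (μ := κ ξ) (f := h) (C := C)
        (Eventually.of_forall hC)
      simpa [opA] using this

lemma opA_iter_meas {S : Type*} [MeasurableSpace S] (κ : Kernel S S) [IsMarkovKernel κ] (m : ℕ)
    (h : S → ℝ) (hm : Measurable h) (C : ℝ) (hC : ∀ u, |h u| ≤ C) :
    Measurable ((opA κ)^[m] h) ∧ ∀ ξ, |(opA κ)^[m] h ξ| ≤ C := by
  induction m with
  | zero => exact ⟨hm, hC⟩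
  | succ m ih =>
    rw [Function.iterate_succ_apply']
    refine ⟨(ih.1.stronglyMeasurable.integral_kernel).measurable, fun ξ => ?_⟩
    have := norm_integral_le_of_norm_le_const (μ := κ ξ) (f := (opA κ)^[m] h) (C := C)
        (Eventually.of_forall ih.2)
    simpa [opA] using this

lemma ergodic_aux {Ω S : Type*} [m0 : MeasurableSpace Ω] [MeasurableSpace S]
    (P : Measure Ω) [IsProbabilityMeasure P]
    (Z : ℕ → Ω → S) (hZ : ∀ n, Measurable (Z n)) (A : Set S)
    (hZA : ∀ n, 1 ≤ n → ∀ ω, Z n ω ∈ A) (κ : Kernel S S) [IsMarkovKernel κ]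
    (hMarkov : ∀ n, 1 ≤ n → ∀ g : S → ℝ, Measurable g → (∃ C, ∀ u, |g u| ≤ C) →
      P[fun ω => g (Z (n+1) ω)|⨆ i : Fin n, MeasurableSpace.comap (Z (i.1+1)) inferInstance]
        =ᵐ[P] fun ω => ∫ u, g u ∂(κ (Z n ω)))
    (π : Measure S) [IsProbabilityMeasure π] (c ρ : ℝ) (hρ : 1 < ρ)
    (hTV : ∀ n : ℕ, 1 ≤ n → ∀ ξ ∈ A, ∀ B : Set S, MeasurableSet B →
      |(iterK (fun ξ => κ ξ) n ξ B).toReal - (π B).toReal| ≤ c * ρ ^ (-(n:ℝ)))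
    (h : S → ℝ) (hm : Measurable h) (h0 : ∀ u, 0 ≤ h u) (C : ℝ) (hC : ∀ u, h u ≤ C) :
    ∀ᵐ ω ∂P, Tendsto (fun n : ℕ => (n:ℝ)⁻¹ * ∑ i ∈ Finset.range n, h (Z (i+1) ω)) atTop
      (nhds (∫ u, h u ∂π)) := by
  have hCa : ∀ u, |h u| ≤ C := fun u => by rw [abs_of_nonneg (h0 u)]; exact hC u
  have hstep : ∀ m : ℕ, ∀ᵐ ω ∂P, Tendsto (fun n : ℕ => (n:ℝ)⁻¹ * ∑ i ∈ Finset.range n,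
      ((opA κ)^[m] h (Z (i+2) ω) - (opA κ)^[m+1] h (Z (i+1) ω))) atTop (nhds 0) := by
    intro m
    obtain ⟨am, ab⟩ := opA_iter_meas κ m h hm C hCa
    have := chain_aux P Z hZ A hZA κ hMarkov (fun _ => (opA κ)^[m] h) (fun _ => am) (fun _ => C)
      (fun _ => ab) (fun _ => C^2) ?_ ?_
    · simp only [Function.iterate_succ_apply']
      exact this
    · intro i ξ _
      have := norm_integral_le_of_norm_le_const (μ := κ ξ) (f := fun u => ((opA κ)^[m] h u)^2)
        (C := C^2) (Eventually.of_forall fun u => by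
          rw [Real.norm_eq_abs, abs_pow]; exact pow_le_pow_left₀ (abs_nonneg _) (ab u) 2)
      rw [probReal_univ, mul_one] at this
      exact (le_abs_self _).trans this
    · have := ((summable_nat_add_iff 1).2 (Real.summable_one_div_nat_pow.2 (le_refl 2))).mul_left (C^2)
      simpa [div_eq_mul_inv] using this
  have hall := ae_all_iff.2 hstep
  filter_upwards [hall] with ω hω
  -- telescoping
  have htel : ∀ m : ℕ, Tendsto (fun n : ℕ => (n:ℝ)⁻¹ * ∑ i ∈ Finset.range n,
      (h (Z (i+1) ω) - (opA κ)^[m] h (Z (i+1) ω))) atTop (nhds 0) := by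
    intro m
    induction m with
    | zero => simp
    | succ m ih =>
      obtain ⟨am, ab⟩ := opA_iter_meas κ m h hm C hCa
      have hb : Tendsto (fun n : ℕ => (n:ℝ)⁻¹ * ((opA κ)^[m] h (Z 1 ω)
          - (opA κ)^[m] h (Z (n+1) ω))) atTop (nhds 0) := by
        have hn : Tendsto (fun n : ℕ => (n:ℝ)⁻¹ * (2 * C)) atTop (nhds 0) := by
          simpa using (tendsto_inv_atTop_nhds_zero_nat (𝕜 := ℝ)).mul_const (2*C)
        refine squeeze_zero_norm (fun n => ?_) hn
        rw [norm_mul, Real.norm_eq_abs, Real.norm_eq_abs, abs_of_nonneg (by positivity)]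
        gcongr
        have a := ab (Z 1 ω)
        have b := ab (Z (n+1) ω)
        rw [abs_le] at *
        constructor <;> linarith
      have := (ih.add hb).add (hω m)
      simp only [add_zero] at this
      refine this.congr fun n => ?_
      rw [← mul_add, ← mul_add]
      congr 1
      have ht := Finset.sum_range_sub' (fun i => (opA κ)^[m] h (Z (i+1) ω)) n
      simp only [zero_add] at ht
      rw [← ht, ← Finset.sum_add_distrib, ← Finset.sum_add_distrib]
      refine Finset.sum_congr rfl fun i _ => ?_
      ring
  have hclose : ∀ m : ℕ, ∀ i, |(opA κ)^[m+1] h (Z (i+1) ω) - ∫ u, h u ∂π|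
      ≤ c * ρ ^ (-((m+1:ℕ):ℝ)) * |C| := by
    intro m i
    rw [opA_iter κ (m+1) _ h hm C hCa]
    have := iterK_prob κ (m+1) (Z (i+1) ω)
    exact tv_aux _ _ h hm h0 C hC _ (hTV (m+1) (by omega) _ (hZA _ (by omega) ω))
  have hlim : Tendsto (fun m : ℕ => c * ρ ^ (-((m+1:ℕ):ℝ)) * |C|) atTop (nhds 0) := by
    have h1 : Tendsto (fun m : ℕ => (ρ⁻¹)^(m+1)) atTop (nhds 0) :=
      (tendsto_add_atTop_iff_nat 1).2 (tendsto_pow_atTop_nhds_zero_of_lt_one (by positivity)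
        (inv_lt_one_of_one_lt₀ hρ))
    have h2 := (h1.const_mul c).mul_const |C|
    simp only [mul_zero, zero_mul] at h2
    refine h2.congr fun m => ?_
    rw [Real.rpow_neg (by positivity), Real.rpow_natCast, inv_pow]
  rw [Metric.tendsto_atTop]
  intro e he
  obtain ⟨m, hmm⟩ := ((hlim.eventually (gt_mem_nhds (half_pos he)))).exists
  obtain ⟨N, hN⟩ := Metric.tendsto_atTop.1 (htel (m+1)) (e/2) (half_pos he)
  refine ⟨max N 1, fun n hn => ?_⟩
  have hn1 := hN n (le_of_max_le_left hn)
  have hn0 : (0:ℝ) < n := by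
    have := le_of_max_le_right hn
    exact_mod_cast this
  rw [Real.dist_eq, sub_zero] at hn1
  rw [Real.dist_eq]
  have e1 : (n:ℝ)⁻¹ * ∑ i ∈ Finset.range n, h (Z (i+1) ω) - ∫ u, h u ∂π
     = (n:ℝ)⁻¹ * ∑ i ∈ Finset.range n, (h (Z (i+1) ω) - (opA κ)^[m+1] h (Z (i+1) ω))
      + (n:ℝ)⁻¹ * ∑ i ∈ Finset.range n, ((opA κ)^[m+1] h (Z (i+1) ω) - ∫ u, h u ∂π) := by
    rw [← mul_add, ← Finset.sum_add_distrib]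
    simp only [sub_add_sub_cancel, Finset.sum_sub_distrib, Finset.sum_const, Finset.card_range,
      nsmul_eq_mul]
    field_simp
  have e2 : |(n:ℝ)⁻¹ * ∑ i ∈ Finset.range n, ((opA κ)^[m+1] h (Z (i+1) ω) - ∫ u, h u ∂π)|
      ≤ c * ρ ^ (-((m+1:ℕ):ℝ)) * |C| := by
    rw [abs_mul, abs_of_pos (by positivity), inv_mul_le_iff₀ hn0]
    refine (Finset.abs_sum_le_sum_abs _ _).trans ?_
    refine (Finset.sum_le_sum fun i _ => hclose m i).trans ?_
    simp
  rw [e1]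
  exact (abs_add_le _ _).trans_lt (by linarith)

lemma ball_aux {X : Type*} [NormedAddCommGroup X] [NormedSpace ℝ X] (E : Set X) (hE : IsOpen E)
    (x : X) (hx : x ∈ E) (s : ℝ) (hs : s < Metric.infDist x (frontier E)) :
    Metric.ball x s ⊆ E := by
  rcases le_or_gt s 0 with h0 | h0
  · rw [Metric.ball_eq_empty.2 h0]; exact Set.empty_subset _
  have hdisj : ∀ z ∈ Metric.ball x s, z ∉ frontier E := by
    intro z hz hzf
    have := Metric.infDist_le_dist_of_mem (x := x) hzf
    rw [Metric.mem_ball, dist_comm] at hz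
    linarith
  have hpre : IsPreconnected (Metric.ball x s) := (convex_ball x s).isPreconnected
  refine hpre.subset_left_of_subset_union hE isClosed_closure.isOpen_compl
    (Set.disjoint_compl_right_iff_subset.2 subset_closure) ?_ ⟨x, Metric.mem_ball_self h0, hx⟩
  intro z hz
  by_cases hzE : z ∈ E
  · exact Or.inl hzE
  · refine Or.inr fun hc => hdisj z hz ?_
    rw [hE.frontier_eq]; exact ⟨hc, hzE⟩

lemma dens_aux {d : ℕ} (E : Set (EuclideanSpace ℝ (Fin d))) (hE : IsOpen E)
    (ν : Measure (EuclideanSpace ℝ (Fin d)))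
    (f : EuclideanSpace ℝ (Fin d) → ℝ) (hf : Measurable f) (hf0 : ∀ z, 0 ≤ f z)
    (hν : ∀ B : Set (EuclideanSpace ℝ (Fin d)), B ⊆ E → MeasurableSet B →
      ν B = ∫⁻ z in B, ENNReal.ofReal (f z) ∂volume)
    (g : EuclideanSpace ℝ (Fin d) → ℝ) (hg : ∀ z, z ∉ E → g z = 0) :
    ∫ u, g u ∂ν = ∫ z, f z * g z := by
  have h1 : ν.restrict E = (volume.withDensity fun z => ENNReal.ofReal (f z)).restrict E := by
    ext B hB
    rw [Measure.restrict_apply hB, Measure.restrict_apply hB,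
      hν _ Set.inter_subset_right (hB.inter hE.measurableSet),
      withDensity_apply _ (hB.inter hE.measurableSet)]
  rw [← setIntegral_eq_integral_of_forall_compl_eq_zero (s := E) hg, h1,
    setIntegral_eq_integral_of_forall_compl_eq_zero hg,
    integral_withDensity_eq_integral_toReal_smul hf.ennreal_ofReal (by simp)]
  simp [ENNReal.toReal_ofReal (hf0 _)]

lemma kern_aux {d : ℕ} (K : EuclideanSpace ℝ (Fin d) → ℝ) (hKint : ∫ z, K z = 1)
    (x : EuclideanSpace ℝ (Fin d)) (v : ℝ) (hv : 0 < v) :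
    ∫ u, (v^d)⁻¹ * K (v⁻¹ • (u - x)) = 1 := by
  rw [integral_const_mul, integral_sub_right_eq_self (fun u => K (v⁻¹ • u)) x,
    Measure.integral_comp_inv_smul_of_nonneg _ _ hv.le, hKint]
  simp [hv.ne']

lemma bias_aux {d : ℕ} (E : Set (EuclideanSpace ℝ (Fin d))) (hE : IsOpen E)
    (ν : Measure (EuclideanSpace ℝ (Fin d)))
    (f : EuclideanSpace ℝ (Fin d) → ℝ) (hf : Measurable f) (hf0 : ∀ z, 0 ≤ f z)
    (Cr : ℝ) (hfC : ∀ z, f z ≤ Cr) (L : ℝ)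
    (x : EuclideanSpace ℝ (Fin d)) (hx : x ∈ E)
    (hL : ∀ b ∈ E, ∀ b' ∈ E, |f b' - f b| ≤ L * dist b' b)
    (hν : ∀ B : Set (EuclideanSpace ℝ (Fin d)), B ⊆ E → MeasurableSet B →
      ν B = ∫⁻ z in B, ENNReal.ofReal (f z) ∂volume)
    (K : (EuclideanSpace ℝ (Fin d)) → ℝ) (hKmeas : Measurable K) (hKnonneg : ∀ z, 0 ≤ K z)
    (CK : ℝ) (hKbdd : ∀ z, K z ≤ CK) (hKint : ∫ z, K z ∂volume = 1)
    (δ : ℝ) (hKsupp : Function.support K ⊆ Metric.ball 0 δ) (v : ℝ) (hv : 0 < v)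
    (hball : Metric.ball x (v * δ) ⊆ E) :
    |∫ u, (v^d)⁻¹ * K (v⁻¹ • (u - x)) ∂ν - f x| ≤ |L| * (v * δ) ∧
    ∫ u, ((v^d)⁻¹ * K (v⁻¹ • (u - x)))^2 ∂ν ≤ (v^d)⁻¹ * CK * Cr := by
  set g : EuclideanSpace ℝ (Fin d) → ℝ := fun u => (v^d)⁻¹ * K (v⁻¹ • (u - x)) with hgdef
  have hg1 : ∫ u, g u = 1 := kern_aux K hKint x v hv
  have hgi : Integrable g := by
    by_contra h
    rw [integral_undef h] at hg1; exact zero_ne_one hg1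
  have hvd : 0 < (v^d)⁻¹ := by positivity
  have hg0 : ∀ u, 0 ≤ g u := fun u => mul_nonneg hvd.le (hKnonneg _)
  have hgC : ∀ u, g u ≤ (v^d)⁻¹ * CK := fun u => mul_le_mul_of_nonneg_left (hKbdd _) hvd.le
  have hgm : Measurable g := by
    simp only [hgdef]
    exact (hKmeas.comp (by fun_prop)).const_mul _
  have hgs : ∀ u, g u ≠ 0 → u ∈ Metric.ball x (v*δ) := by
    intro u hu
    have hk : K (v⁻¹ • (u - x)) ≠ 0 := fun h => hu (by simp [hgdef, h])
    have := hKsupp hk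
    rw [mem_ball_zero_iff, norm_smul, norm_inv, Real.norm_eq_abs, abs_of_pos hv,
      inv_mul_lt_iff₀ hv] at this
    rw [Metric.mem_ball, dist_eq_norm]; exact this
  have hgE : ∀ z, z ∉ E → g z = 0 := fun z hz => by
    by_contra h; exact hz (hball (hgs z h))
  have hfgi : Integrable (fun z => f z * g z) := by
    refine hgi.bdd_mul (c := Cr) hf.aestronglyMeasurable (Eventually.of_forall fun z => ?_)
    rw [Real.norm_eq_abs, abs_of_nonneg (hf0 z)]; exact hfC z
  constructor
  · rw [dens_aux E hE ν f hf hf0 hν g hgE]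
    have e : f x = ∫ z, f x * g z := by rw [integral_const_mul, hg1, mul_one]
    rw [e, ← integral_sub hfgi (hgi.const_mul _)]
    have : ∫ z, |L| * (v*δ) * g z = |L| * (v*δ) := by rw [integral_const_mul, hg1, mul_one]
    rw [← this]
    rw [← Real.norm_eq_abs (∫ z, (f z * g z - f x * g z))]
    refine norm_integral_le_of_norm_le (hgi.const_mul _) (Eventually.of_forall fun z => ?_)
    by_cases hz : g z = 0
    · simp [hz]
    have hzb := hgs z hz
    rw [← sub_mul, norm_mul, Real.norm_eq_abs, Real.norm_eq_abs, abs_of_nonneg (hg0 z)]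
    refine mul_le_mul_of_nonneg_right ?_ (hg0 z)
    refine (hL x hx z (hball hzb)).trans ?_
    have h1 : dist z x ≤ v * δ := (Metric.mem_ball.1 hzb).le
    calc L * dist z x ≤ |L| * dist z x := mul_le_mul_of_nonneg_right (le_abs_self _) dist_nonneg
      _ ≤ _ := mul_le_mul_of_nonneg_left h1 (abs_nonneg _)
  · rw [dens_aux E hE ν f hf hf0 hν (fun z => g z^2) (fun z hz => by simp [hgE z hz])]
    have : ∫ z, ((v^d)⁻¹ * CK * Cr) * g z = (v^d)⁻¹ * CK * Cr := by
      rw [integral_const_mul, hg1, mul_one]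
    rw [← this]
    refine integral_mono_of_nonneg (Eventually.of_forall fun z => mul_nonneg (hf0 z) (sq_nonneg _))
      (hgi.const_mul _) (Eventually.of_forall fun z => ?_)
    have hC0 : 0 ≤ Cr := (hf0 x).trans (hfC x)
    calc f z * g z^2 = (f z * g z) * g z := by ring
      _ ≤ (Cr * ((v^d)⁻¹ * CK)) * g z :=
        mul_le_mul_of_nonneg_right (mul_le_mul (hfC z) (hgC z) (hg0 z) hC0) (hg0 z)
      _ = _ := by ring

theorem stmt2
    {d : ℕ} (hd : 1 ≤ d)
    {Ω : Type*} [MeasurableSpace Ω] (P : Measure Ω) [IsProbabilityMeasure P]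
    (E : Set (EuclideanSpace ℝ (Fin d))) (hEopen : IsOpen E) (hEne : E.Nonempty)
    (Zm : ℕ → Ω → (EuclideanSpace ℝ (Fin d))) (hZmmeas : ∀ n, Measurable (Zm n))
    (hZmmem : ∀ n, 1 ≤ n → ∀ ω, Zm n ω ∈ closure E)
    (R : (EuclideanSpace ℝ (Fin d)) → Measure (EuclideanSpace ℝ (Fin d))) (hRprob : ∀ ξ, IsProbabilityMeasure (R ξ))
    (hRkermeas : ∀ B : Set (EuclideanSpace ℝ (Fin d)), MeasurableSet B → Measurable fun ξ => R ξ B)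
    (hMarkov : ∀ n, 1 ≤ n → ∀ g : (EuclideanSpace ℝ (Fin d)) → ℝ, Measurable g → (∃ C, ∀ u, |g u| ≤ C) →
      P[fun ω => g (Zm (n+1) ω)|⨆ i : Fin n, MeasurableSpace.comap (Zm (i.1+1)) inferInstance]
        =ᵐ[P] fun ω => ∫ u, g u ∂(R (Zm n ω)))
    (μ : Measure (EuclideanSpace ℝ (Fin d))) (hμprob : IsProbabilityMeasure μ)
    (ε : ℝ) (hε : 0 < ε) (k : ℕ) (hk : 1 ≤ k)
    (hDoeblin : ∀ ξ ∈ closure E, ∀ B : Set (EuclideanSpace ℝ (Fin d)), MeasurableSet B →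
      ENNReal.ofReal ε * μ B ≤ iterK R k ξ B)
    (π : Measure (EuclideanSpace ℝ (Fin d))) (hπprob : IsProbabilityMeasure π)
    (hπinv : ∀ B : Set (EuclideanSpace ℝ (Fin d)), MeasurableSet B → π B = ∫⁻ ξ, R ξ B ∂π)
    (κ ρ : ℝ) (hκ : 0 < κ) (hρ : 1 < ρ)
    (hTV : ∀ n : ℕ, 1 ≤ n → ∀ ξ ∈ closure E, ∀ B : Set (EuclideanSpace ℝ (Fin d)), MeasurableSet B →
      |(iterK R n ξ B).toReal - (π B).toReal| ≤ κ * ρ ^ (-(n:ℝ)))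
    (r : (EuclideanSpace ℝ (Fin d)) → (EuclideanSpace ℝ (Fin d)) → ℝ) (hrmeas : Measurable (Function.uncurry r)) (hrnonneg : ∀ a b, 0 ≤ r a b)
    (Cr : ℝ) (hrbdd : ∀ a b, r a b ≤ Cr)
    (rLip : ℝ) (hrLip : ∀ a : (EuclideanSpace ℝ (Fin d)), ∀ b ∈ E, ∀ b' ∈ E, |r a b' - r a b| ≤ rLip * dist b' b)
    (hRdens : ∀ ξ ∈ closure E, ∀ B : Set (EuclideanSpace ℝ (Fin d)), B ⊆ E → MeasurableSet B →
      R ξ B = ∫⁻ z in B, ENNReal.ofReal (r ξ z) ∂volume)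
    (p : (EuclideanSpace ℝ (Fin d)) → ℝ) (hp : ∀ z ∈ E, p z = ∫ u, r u z ∂π)
    (K : (EuclideanSpace ℝ (Fin d)) → ℝ) (hKmeas : Measurable K) (hKnonneg : ∀ z, 0 ≤ K z)
    (CK : ℝ) (hKbdd : ∀ z, K z ≤ CK) (hKint : ∫ z, K z ∂volume = 1)
    (δ : ℝ) (hδ : 0 < δ) (hKsupp : Function.support K ⊆ Metric.ball 0 δ)
    (v1 Alpha : ℝ) (hv1 : 0 < v1) (hAlpha : 0 < Alpha)
    (v : ℕ → ℝ) (hv : ∀ j : ℕ, v j = v1 * (j:ℝ) ^ (-Alpha))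
    (x : (EuclideanSpace ℝ (Fin d))) (hx : x ∈ E)
    (hxdist : v1 * δ < Metric.infDist x (frontier E))
    (hαd : Alpha * d < 1) :
    ∀ᵐ ω ∂P, Tendsto (fun n : ℕ => (n:ℝ)⁻¹ * ∑ j ∈ Finset.Icc 1 (n+1), ((v j) ^ d)⁻¹ * K ((v j)⁻¹ • (Zm j ω - x))) atTop (nhds (p x)) := by
  have hRm : Measurable R := Measure.measurable_of_measurable_coe R hRkermeas
  obtain ⟨Q, rfl⟩ : ∃ Q : Kernel (EuclideanSpace ℝ (Fin d)) (EuclideanSpace ℝ (Fin d)),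
      R = fun ξ => Q ξ := ⟨⟨R, hRm⟩, rfl⟩
  have hQ : IsMarkovKernel Q := ⟨hRprob⟩
  have hvpos : ∀ i : ℕ, 0 < v (i+2) := fun i => by rw [hv]; positivity
  have hvle : ∀ i : ℕ, v (i+2) ≤ v1 := fun i => by
    rw [hv]
    have : ((i+2:ℕ):ℝ) ^ (-Alpha) ≤ 1 :=
      Real.rpow_le_one_of_one_le_of_nonpos (by push_cast; linarith [(Nat.cast_nonneg i : (0:ℝ) ≤ i)])
        (by linarith)
    nlinarith
  have hball : ∀ i : ℕ, Metric.ball x (v (i+2) * δ) ⊆ E := fun i =>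
    (Metric.ball_subset_ball (mul_le_mul_of_nonneg_right (hvle i) hδ.le)).trans
      (ball_aux E hEopen x hx _ hxdist)
  have hbias : ∀ i : ℕ, ∀ ξ ∈ closure E, _ := fun i ξ hξ =>
    bias_aux E hEopen (Q ξ) (r ξ) (hrmeas.of_uncurry_left) (hrnonneg ξ) Cr (hrbdd ξ) rLip x hx
      (hrLip ξ) (hRdens ξ hξ) K hKmeas hKnonneg CK hKbdd hKint δ hKsupp (v (i+2)) (hvpos i) (hball i)
  have hvlim : Tendsto (fun i : ℕ => |rLip| * (v (i+2) * δ)) atTop (nhds 0) := by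
    have h1 : Tendsto (fun i : ℕ => ((i+2:ℕ):ℝ) ^ (-Alpha)) atTop (nhds 0) :=
      ((tendsto_rpow_neg_atTop hAlpha).comp tendsto_natCast_atTop_atTop).comp
        (tendsto_add_atTop_nat 2)
    have h2 := (((h1.const_mul v1).mul_const δ).const_mul |rLip|)
    simp only [mul_zero, zero_mul] at h2
    refine h2.congr fun i => ?_
    rw [hv]
  have hCr0 : 0 ≤ Cr := (hrnonneg x x).trans (hrbdd x x)
  have hCK0 : 0 ≤ CK := (hKnonneg x).trans (hKbdd x)
  have hsum : Summable fun i : ℕ => ((v (i+2))^d)⁻¹ * CK * Cr / ((i:ℝ)+1)^2 := by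
    have h1 : Summable fun i : ℕ => ((i+2:ℕ):ℝ) ^ (Alpha * d - 2) :=
      (summable_nat_add_iff 2).2 (Real.summable_nat_rpow.2 (by linarith))
    refine Summable.of_nonneg_of_le (fun i => ?_) (fun i => ?_)
      (h1.mul_left (4 * ((v1^d)⁻¹ * CK * Cr)))
    · have := hvpos i
      positivity
    · have hi : (0:ℝ) < ((i+2:ℕ):ℝ) := by positivity
      have e1 : ((v (i+2))^d)⁻¹ = (v1^d)⁻¹ * ((i+2:ℕ):ℝ) ^ (Alpha * d) := by
        rw [hv, mul_pow, mul_inv, ← Real.rpow_natCast (((i+2:ℕ):ℝ) ^ (-Alpha)) d,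
          ← Real.rpow_mul hi.le, ← Real.rpow_neg hi.le]
        congr 2; ring
      have e2 : ((i+2:ℕ):ℝ) ^ (Alpha * d - 2) = ((i+2:ℕ):ℝ) ^ (Alpha * d) / ((i+2:ℕ):ℝ)^2 := by
        rw [Real.rpow_sub hi]; norm_num
      rw [e1, e2]
      have hp0 : 0 ≤ ((i+2:ℕ):ℝ) ^ (Alpha * d) := by positivity
      have hB : 0 ≤ (v1^d)⁻¹ * CK * Cr * ((i+2:ℕ):ℝ) ^ (Alpha * d) := by positivity
      rw [show (v1^d)⁻¹ * ((i+2:ℕ):ℝ) ^ (Alpha * d) * CK * Cr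
        = (v1^d)⁻¹ * CK * Cr * ((i+2:ℕ):ℝ) ^ (Alpha * d) by ring,
        show 4 * ((v1^d)⁻¹ * CK * Cr) * (((i+2:ℕ):ℝ) ^ (Alpha * d) / ((i+2:ℕ):ℝ)^2)
        = ((v1^d)⁻¹ * CK * Cr * ((i+2:ℕ):ℝ) ^ (Alpha * d)) * (4 / ((i+2:ℕ):ℝ)^2) by ring,
        div_eq_mul_inv]
      refine mul_le_mul_of_nonneg_left ?_ hB
      rw [inv_le_comm₀ (by positivity) (by positivity), inv_div, div_le_iff₀ (by norm_num)]
      push_cast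
      nlinarith [(Nat.cast_nonneg i : (0:ℝ) ≤ i)]
  have hA := chain_aux P Zm hZmmeas (closure E) hZmmem Q hMarkov
    (fun i u => ((v (i+2))^d)⁻¹ * K ((v (i+2))⁻¹ • (u - x)))
    (fun i => (hKmeas.comp (by fun_prop)).const_mul _)
    (fun i => ((v (i+2))^d)⁻¹ * CK) (fun i u => by
      have := hvpos i
      have hn : 0 ≤ ((v (i+2))^d)⁻¹ := by positivity
      rw [abs_of_nonneg (mul_nonneg hn (hKnonneg _))]
      exact mul_le_mul_of_nonneg_left (hKbdd _) hn)
    (fun i => ((v (i+2))^d)⁻¹ * CK * Cr) (fun i ξ hξ => (hbias i ξ hξ).2) hsum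
  have hB := ergodic_aux P Zm hZmmeas (closure E) hZmmem Q hMarkov π κ ρ hρ hTV
    (fun u => r u x) (hrmeas.of_uncurry_right) (fun u => hrnonneg u x) Cr (fun u => hrbdd u x)
  rw [hp x hx]
  filter_upwards [hA, hB] with ω h1 h2
  have h3 : Tendsto (fun n : ℕ => (n:ℝ)⁻¹ * ∑ i ∈ Finset.range n,
      (∫ u, ((v (i+2))^d)⁻¹ * K ((v (i+2))⁻¹ • (u - x)) ∂(Q (Zm (i+1) ω)) - r (Zm (i+1) ω) x))
      atTop (nhds 0) := by
    apply Filter.Tendsto.cesaro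
    exact squeeze_zero_norm (fun i => (hbias i _ (hZmmem (i+1) (by omega) ω)).1) hvlim
  have h4 : Tendsto (fun n : ℕ => (n:ℝ)⁻¹ * (((v 1)^d)⁻¹ * K ((v 1)⁻¹ • (Zm 1 ω - x))))
      atTop (nhds 0) := by
    simpa using (tendsto_inv_atTop_nhds_zero_nat (𝕜 := ℝ)).mul_const
      (((v 1)^d)⁻¹ * K ((v 1)⁻¹ • (Zm 1 ω - x)))
  have h5 := ((h4.add h1).add h3).add h2
  simp only [zero_add] at h5
  refine h5.congr fun n => ?_
  rw [← mul_add, ← mul_add, ← mul_add]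
  congr 1
  have hs : ∀ f : ℕ → ℝ, ∑ j ∈ Finset.Icc 1 (n+1), f j = f 1 + ∑ i ∈ Finset.range n, f (i+2) := by
    intro f
    induction n with
    | zero => simp
    | succ n ih =>
      rw [Finset.sum_Icc_succ_top (by omega), ih, Finset.sum_range_succ, add_assoc]
  rw [hs, add_assoc, add_assoc, ← Finset.sum_add_distrib, ← Finset.sum_add_distrib]
  congr 1
  refine Finset.sum_congr rfl fun i _ => ?_
  ring
end
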